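/- arXiv:1208.3366 — 12 statements merged into one kernel-verified Lean document; each statement's English description precedes it below -/
import Mathlib

section
/- Let p > 3 be a prime and let a, b be nonzero elements of 𝔽_p. Then the number of roots of the polynomial x³ + a·x − b in 𝔽_p, counted with multiplicity, equals 3 if D·u_{p−2}² = 0, equals 0 if D·u_{p−2}² = 9a², and equals 1 otherwise (and the two conditions D·u_{p−2}² = 0 and D·u_{p−2}² = 9a² are mutually exclusive since a ≠ 0 and p > 3). -/
open Polynomial

theorem aux_three {K : Type*} [Field K] (a b r s t : K) (h1 : r + s + t = 0)
    (h2 : r * s + s * t + t * r = a) (h3 : r * s * t = b) :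
    ((X ^ 3 + C a * X - C b : K[X]).roots).card = 3 := by
  have h : (X ^ 3 + C a * X - C b : K[X]) = (X - C r) * ((X - C s) * (X - C t)) := by
    have h1' : (C r + C s + C t : K[X]) = 0 := by rw [← C_add, ← C_add, h1, C_0]
    rw [← h2, ← h3]
    simp only [C_add, C_mul]
    linear_combination X ^ 2 * h1'
  have n1 : (X - C s) * (X - C t) ≠ 0 := mul_ne_zero (X_sub_C_ne_zero s) (X_sub_C_ne_zero t)
  rw [h, roots_mul (mul_ne_zero (X_sub_C_ne_zero r) n1), roots_mul n1]
  simp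

theorem aux_one {K : Type*} [Field K] (a b r : K) (hr : r ^ 3 + a * r - b = 0)
    (hq : ∀ s : K, s ^ 2 + r * s + (r ^ 2 + a) ≠ 0) :
    ((X ^ 3 + C a * X - C b : K[X]).roots).card = 1 := by
  have h : (X ^ 3 + C a * X - C b : K[X]) = (X - C r) * (X ^ 2 + C r * X + C (r ^ 2 + a)) := by
    have hb : b = r ^ 3 + a * r := by linear_combination -hr
    rw [hb]
    simp only [C_add, C_mul, C_pow]
    ring
  have n1 : (X ^ 2 + C r * X + C (r ^ 2 + a)) ≠ 0 := by
    intro h0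
    have := hq 0
    have h2 := congrArg (eval 0) h0
    simp at h2
    apply this
    simp [h2]
  have n2 : (X ^ 2 + C r * X + C (r ^ 2 + a)).roots = 0 := by
    apply Multiset.eq_zero_of_forall_notMem
    intro s hs
    have := (mem_roots'.1 hs).2
    apply hq s
    simpa [IsRoot.def] using this
  rw [h, roots_mul (mul_ne_zero (X_sub_C_ne_zero r) n1), n2]
  simp

theorem aux_zero {K : Type*} [Field K] (a b : K) (hr : ∀ r : K, r ^ 3 + a * r - b ≠ 0) :
    ((X ^ 3 + C a * X - C b : K[X]).roots).card = 0 := by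
  rw [Multiset.card_eq_zero]
  apply Multiset.eq_zero_of_forall_notMem
  intro s hs
  have := (mem_roots'.1 hs).2
  apply hr s
  simpa [IsRoot.def] using this

theorem aux_fixed (p : ℕ) [Fact p.Prime] (L : Type*) [Field L] [Algebra (ZMod p) L] (x : L)
    (h : x ^ p = x) : ∃ y : ZMod p, algebraMap (ZMod p) L y = x := by
  haveI : CharP L p := charP_of_injective_algebraMap (algebraMap (ZMod p) L).injective p
  have h1 := (Subfield.mem_bot_iff_pow_eq_self (F := L) (p := p)).2 h
  have h2 : (⊥ : Subfield L) ≤ (algebraMap (ZMod p) L).fieldRange := bot_le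
  exact h2 h1

/-- Vieta in an algebraically closed field. -/
theorem aux_exists {L : Type*} [Field L] [IsAlgClosed L] (h2 : (2 : L) ≠ 0) (a r : L) :
    ∃ s t : L, r + s + t = 0 ∧ r * s + s * t + t * r = a := by
  obtain ⟨d, hd⟩ := IsAlgClosed.exists_eq_mul_self (r ^ 2 - 4 * (r ^ 2 + a))
  refine ⟨(-r + d) / 2, (-r - d) / 2, ?_, ?_⟩
  · field_simp; ring
  · field_simp
    linear_combination hd

theorem aux_root {L : Type*} [Field L] [IsAlgClosed L] (a b : L) :
    ∃ r : L, r ^ 3 + a * r - b = 0 := by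
  have hd : (X ^ 3 + C a * X - C b : L[X]).degree = 3 := by compute_degree!
  obtain ⟨r, hr⟩ := IsAlgClosed.exists_root (X ^ 3 + C a * X - C b : L[X]) (by rw [hd]; decide)
  exact ⟨r, by simpa [IsRoot.def] using hr⟩

theorem aux_seq {L : Type*} [Field L] (r s t : L) (h1 : r + s + t = 0) (u : ℕ → L)
    (hu1 : u 1 = 0) (hu2 : u 2 = -(r * s + s * t + t * r)) (hu3 : u 3 = r * s * t)
    (hrec : ∀ n, 1 ≤ n → u (n + 3) = r * s * t * u n - (r * s + s * t + t * r) * u (n + 1))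
    (n : ℕ) : (r - s) * (r - t) * (s - t) * u (n + 1) =
      r ^ (n + 3) * (s - t) - s ^ (n + 3) * (r - t) + t ^ (n + 3) * (r - s) := by
  obtain rfl : r = -s - t := by linear_combination h1
  induction n using Nat.strong_induction_on with
  | _ n ih =>
    match n, ih with
    | 0, _ => rw [hu1]; ring
    | 1, _ => rw [hu2]; ring
    | 2, _ => rw [hu3]; ring
    | k + 3, ih =>
      have e := hrec (k + 1) (by omega)
      have i0 := ih k (by omega)
      have i1 := ih (k + 1) (by omega)
      rw [show k + 3 + 1 = k + 1 + 3 by ring, e]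
      linear_combination ((-s - t) * s * t) * i0 -
        ((-s - t) * s + s * t + t * (-s - t)) * i1

theorem stmt_0 (p : ℕ) [Fact p.Prime] (hp : 3 < p)
    (a b : ZMod p) (ha : a ≠ 0) (hb : b ≠ 0)
    (u : ℕ → ZMod p) (hu1 : u 1 = 0) (hu2 : u 2 = -a) (hu3 : u 3 = b)
    (hurec : ∀ n, 1 ≤ n → u (n + 3) = b * u n - a * u (n + 1))
    (D : ZMod p) (hD : D = -4 * a ^ 3 - 27 * b ^ 2) :
    (D * u (p - 2) ^ 2 = 0 →
      ((X ^ 3 + C a * X - C b : (ZMod p)[X]).roots).card = 3) ∧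
    (D * u (p - 2) ^ 2 = 9 * a ^ 2 →
      ((X ^ 3 + C a * X - C b : (ZMod p)[X]).roots).card = 0) ∧
    (D * u (p - 2) ^ 2 ≠ 0 → D * u (p - 2) ^ 2 ≠ 9 * a ^ 2 →
      ((X ^ 3 + C a * X - C b : (ZMod p)[X]).roots).card = 1) ∧
    ¬(D * u (p - 2) ^ 2 = 0 ∧ D * u (p - 2) ^ 2 = 9 * a ^ 2) := by
  have h2 : (2 : ZMod p) ≠ 0 := by
    intro h
    have := (ZMod.natCast_eq_zero_iff 2 p).1 (by exact_mod_cast h)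
    have := Nat.le_of_dvd (by norm_num) this
    omega
  have h3 : (3 : ZMod p) ≠ 0 := by
    intro h
    have := (ZMod.natCast_eq_zero_iff 3 p).1 (by exact_mod_cast h)
    have := Nat.le_of_dvd (by norm_num) this
    omega
  have h9 : 9 * a ^ 2 ≠ 0 := by
    rw [show 9 * a ^ 2 = (3 * a) ^ 2 by ring]
    exact pow_ne_zero _ (mul_ne_zero h3 ha)
  set f : (ZMod p)[X] := X ^ 3 + C a * X - C b with hf
  set E := D * u (p - 2) ^ 2 with hE
  suffices H : (f.roots.card = 3 ∧ E = 0) ∨ (f.roots.card = 0 ∧ E = 9 * a ^ 2) ∨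
      (f.roots.card = 1 ∧ E ≠ 0 ∧ E ≠ 9 * a ^ 2) by
    rcases H with ⟨h, h'⟩ | ⟨h, h'⟩ | ⟨h, h', h''⟩
    · rw [h, h']; refine ⟨by simp, fun q => absurd q.symm h9, by simp, fun q => h9 q.2.symm⟩
    · rw [h, h']; refine ⟨fun q => absurd q h9, by simp, by simp, fun q => h9 q.1⟩
    · rw [h]; exact ⟨fun q => absurd q h', fun q => absurd q h'', fun _ _ => rfl, fun q => h' q.1⟩
  -- general formula
  let L := AlgebraicClosure (ZMod p)
  let i := algebraMap (ZMod p) L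
  have hi : Function.Injective i := i.injective
  haveI : CharP L p := charP_of_injective_algebraMap hi p
  have ipow : ∀ x : ZMod p, i x ^ p = i x := fun x => by rw [← map_pow, ZMod.pow_card]
  have L2 : (2 : L) ≠ 0 := by
    intro h; apply h2; apply hi; rw [map_ofNat, map_zero]; exact h
  have key : ∀ r s t : L, r + s + t = 0 → r * s + s * t + t * r = i a → r * s * t = i b →
      i E = (r ^ p * (s - t) - s ^ p * (r - t) + t ^ p * (r - s)) ^ 2 := by
    intro r s t e1 e2 e3
    have := aux_seq r s t e1 (fun n => i (u n)) (by simp [hu1]) (by simp [hu2, e2])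
      (by simp [hu3, e3]) (fun n hn => by simp [hurec n hn, e2, e3]) (p - 3)
    rw [show p - 3 + 1 = p - 2 by omega, show p - 3 + 3 = p by omega] at this
    rw [← this, hE, hD]
    simp only [map_mul, map_sub, map_pow, map_neg, ← e2, ← e3, map_ofNat]
    obtain rfl : r = -s - t := by linear_combination e1
    ring
  have frob : ∀ x y : L, (x + y) ^ p = x ^ p + y ^ p := fun x y => add_pow_char x y p
  have fsub : ∀ x y : L, (x - y) ^ p = x ^ p - y ^ p := fun x y => sub_pow_char x y
  have finj : ∀ x y : L, x ^ p = y ^ p → x = y := fun x y h =>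
    frobenius_inj L p (by simpa [frobenius_def] using h)
  have perm : ∀ r s t : L, r + s + t = 0 → r * s + s * t + t * r = i a → r * s * t = i b →
      ∀ x : L, x ^ 3 + i a * x - i b = 0 → x ^ p = r ∨ x ^ p = s ∨ x ^ p = t := by
    intro r s t e1 e2 e3 x hx
    have h0 : (x ^ p) ^ 3 + i a * x ^ p - i b = 0 := by
      have := congrArg (fun z => z ^ p) hx
      simp only [fsub, frob, mul_pow, ipow] at this
      rw [zero_pow (by omega)] at this
      rw [← this]; ring
    have : (x ^ p - r) * ((x ^ p - s) * (x ^ p - t)) = 0 := by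
      rw [← e2, ← e3] at h0
      linear_combination h0 - (x ^ p) ^ 2 * e1
    rcases mul_eq_zero.1 this with h | h
    · left; exact sub_eq_zero.1 h
    rcases mul_eq_zero.1 h with h | h
    · right; left; exact sub_eq_zero.1 h
    · right; right; exact sub_eq_zero.1 h
  by_cases hroot : ∃ r : ZMod p, r ^ 3 + a * r - b = 0
  · obtain ⟨r, hr⟩ := hroot
    have hr0 : r ≠ 0 := by
      rintro rfl; apply hb; linear_combination -hr
    by_cases hq : ∃ s : ZMod p, s ^ 2 + r * s + (r ^ 2 + a) = 0
    · left
      obtain ⟨s, hs⟩ := hq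
      have e1 : r + s + (-r - s) = 0 := by ring
      have e2 : r * s + s * (-r - s) + (-r - s) * r = a := by linear_combination -hs
      have e3 : r * s * (-r - s) = b := by linear_combination hr - r * hs
      refine ⟨aux_three a b r s _ e1 e2 e3, hi ?_⟩
      rw [key (i r) (i s) (i (-r - s)) (by rw [← map_add, ← map_add, e1, map_zero])
        (by simp only [← map_add, ← map_mul, e2]) (by simp only [← map_mul, e3])]
      simp only [ipow, map_zero]
      ring
    · push Not at hq
      right; right
      refine ⟨aux_one a b r hr hq, ?_⟩
      obtain ⟨s, t, e1, e2⟩ := aux_exists L2 (i a) (i r)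
      have hr' : (i r) ^ 3 + i a * i r - i b = 0 := by
        rw [← map_pow, ← map_mul, ← map_add, ← map_sub, hr, map_zero]
      have e3 : i r * s * t = i b := by
        rw [← e2] at hr'
        linear_combination hr' - (i r) ^ 2 * e1
      have rs : ∀ x : L, x = s ∨ x = t → x ^ p ≠ x := by
        intro x hx h
        obtain ⟨y, hy⟩ := aux_fixed p L x h
        change i y = x at hy
        apply hq y
        apply hi
        simp only [map_add, map_mul, map_pow, map_zero]
        rw [hy, ← e2]
        rcases hx with rfl | rfl
        · linear_combination (x + i r) * e1
        · linear_combination (x + i r) * e1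
      have rr : ∀ x : L, x = s ∨ x = t → x ^ p ≠ i r := by
        intro x hx h
        have : x = i r := finj _ _ (by rw [h, ipow])
        exact rs x hx (by rw [this, ipow])
      have sroot : s ^ 3 + i a * s - i b = 0 := by
        rw [← e2, ← e3]; linear_combination s ^ 2 * e1
      have troot : t ^ 3 + i a * t - i b = 0 := by
        rw [← e2, ← e3]; linear_combination t ^ 2 * e1
      have sp : s ^ p = t := by
        rcases perm _ s t e1 e2 e3 s sroot with h | h | h
        · exact absurd h (rr s (Or.inl rfl))
        · exact absurd h (rs s (Or.inl rfl))
        · exact h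
      have tp : t ^ p = s := by
        rcases perm _ s t e1 e2 e3 t troot with h | h | h
        · exact absurd h (rr t (Or.inr rfl))
        · exact h
        · exact absurd h (rs t (Or.inr rfl))
      have hne : s ≠ t := fun h => rs s (Or.inl rfl) (by rw [sp, h])
      have val := key _ s t e1 e2 e3
      rw [ipow, sp, tp] at val
      have val2 : i E = (i (3 * r) * (s - t)) ^ 2 := by
        rw [val]
        obtain rfl : s = - i r - t := by linear_combination e1
        simp only [map_mul, map_ofNat]
        ring
      have h3r : i (3 * r) ≠ 0 := by
        rw [Ne, map_eq_zero_iff i hi]; exact mul_ne_zero h3 hr0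
      refine ⟨?_, ?_⟩
      · intro h
        rw [h, map_zero] at val2
        exact mul_ne_zero h3r (sub_ne_zero.2 hne) (pow_eq_zero_iff two_ne_zero |>.1 val2.symm)
      · intro h
        have : (i (3 * r) * (s - t)) ^ 2 = (i (3 * a)) ^ 2 := by
          rw [← val2, h, ← map_pow]; congr 1; ring
        have fx : (i (3 * r) * (s - t)) ^ p = i (3 * r) * (s - t) := by
          rcases sq_eq_sq_iff_eq_or_eq_neg.1 this with h | h
          · rw [h, ipow]
          · rw [h, ← map_neg, ipow]
        rw [mul_pow, ipow, fsub, sp, tp] at fx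
        have := mul_left_cancel₀ h3r fx
        apply hne
        apply mul_left_cancel₀ L2
        linear_combination -this
  · right; left
    push Not at hroot
    refine ⟨aux_zero a b hroot, hi ?_⟩
    have hD0 : D ≠ 0 := by
      intro h0
      rw [hD] at h0
      apply hroot (3 * b / (2 * a))
      field_simp
      linear_combination -b * h0
    obtain ⟨r, hr⟩ := aux_root (i a) (i b)
    obtain ⟨s, t, e1, e2⟩ := aux_exists L2 (i a) r
    have e3 : r * s * t = i b := by
      rw [← e2] at hr
      linear_combination hr - r ^ 2 * e1
    have sroot : s ^ 3 + i a * s - i b = 0 := by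
      rw [← e2, ← e3]; linear_combination s ^ 2 * e1
    have troot : t ^ 3 + i a * t - i b = 0 := by
      rw [← e2, ← e3]; linear_combination t ^ 2 * e1
    have nofix : ∀ x : L, x ^ 3 + i a * x - i b = 0 → x ^ p ≠ x := by
      intro x hx h
      obtain ⟨y, hy⟩ := aux_fixed p L x h
      change i y = x at hy
      apply hroot y
      apply hi
      simp only [map_add, map_sub, map_mul, map_pow, map_zero, hy, hx]
    have V : ((r - s) * (r - t) * (s - t)) ^ 2 = i D := by
      rw [hD]
      simp only [map_mul, map_sub, map_pow, map_neg, ← e2, ← e3, map_ofNat]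
      obtain rfl : r = -s - t := by linear_combination e1
      ring
    have V0 : (r - s) * (r - t) * (s - t) ≠ 0 := by
      intro h
      rw [h] at V
      apply hD0
      apply hi
      rw [← V]; simp
    have n1 : r ≠ s := by rintro rfl; simp at V0
    have n2 : r ≠ t := by rintro rfl; simp at V0
    have n3 : s ≠ t := by rintro rfl; simp at V0
    have val := key r s t e1 e2 e3
    have fr := nofix r hr
    have fs := nofix s sroot
    have ft := nofix t troot
    have i1 := finj r s
    have i2 := finj r t
    have i3 := finj s t
    have A : (r ^ p = s ∧ s ^ p = t ∧ t ^ p = r) ∨ (r ^ p = t ∧ s ^ p = r ∧ t ^ p = s) := by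
      have pr := perm r s t e1 e2 e3 r hr
      have ps := perm r s t e1 e2 e3 s sroot
      have pt := perm r s t e1 e2 e3 t troot
      clear val V V0 sroot troot hr e1 e2 e3
      grind
    rw [val]
    simp only [map_mul, map_pow, map_ofNat, ← e2]
    obtain rfl : r = -s - t := by linear_combination e1
    rcases A with ⟨A1, A2, A3⟩ | ⟨A1, A2, A3⟩ <;> rw [A1, A2, A3] <;> ring
end

section
/- Let p > 3 be a prime, let a, b be nonzero elements of 𝔽_p, and suppose D·u_{p−2}² = 0. Then the equation x³ + a·x = b has three pairwise distinct solutions in 𝔽_p if and only if D ≠ 0; moreover, when D ≠ 0, every solution x ∈ 𝔽_p satisfies 3x² + a ≠ 0. -/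
theorem stmt_1_aux_pow {F K : Type*} [Field F] [Field K] [Algebra F K] (a b : F)
    (u : ℕ → F) (hu1 : u 1 = 0) (hu2 : u 2 = -a) (hu3 : u 3 = b)
    (hurec : ∀ n, 1 ≤ n → u (n + 3) = b * u n - a * u (n + 1)) (r : K)
    (hr : r ^ 3 + algebraMap F K a * r = algebraMap F K b) (n : ℕ) :
    r ^ (n + 3) = algebraMap F K (u (n + 1)) * r ^ 2 + algebraMap F K (u (n + 2)) * r
      + algebraMap F K (u (n + 3) + a * u (n + 1)) := by
  induction n with
  | zero =>
    simp only [hu1, hu2, hu3, zero_add, map_zero, map_neg, mul_zero, add_zero]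
    linear_combination hr
  | succ n ih =>
    have h := hurec (n + 1) (by omega)
    have e1 : n + 1 + 3 = n + 3 + 1 := by ring
    have e2 : n + 1 + 1 = n + 2 := by ring
    have e3 : n + 1 + 2 = n + 3 := by ring
    rw [h, e1, e2, e3, pow_succ, ih]
    simp only [map_add, map_sub, map_mul]
    linear_combination algebraMap F K (u (n + 1)) * hr

theorem stmt_1_aux_quad {K : Type*} [Field K] (A B C r s t : K) (hrs : r ≠ s) (hrt : r ≠ t)
    (hst : s ≠ t) (h1 : A * r ^ 2 + B * r + C = 0) (h2 : A * s ^ 2 + B * s + C = 0)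
    (h3 : A * t ^ 2 + B * t + C = 0) : A = 0 ∧ B = 0 ∧ C = 0 := by
  have k1 : A * (r + s) + B = 0 := by
    apply mul_left_cancel₀ (sub_ne_zero.2 hrs)
    linear_combination h1 - h2
  have k2 : A * (r + t) + B = 0 := by
    apply mul_left_cancel₀ (sub_ne_zero.2 hrt)
    linear_combination h1 - h3
  have k3 : A = 0 := by
    apply mul_left_cancel₀ (sub_ne_zero.2 hst)
    linear_combination k1 - k2
  subst k3
  have k4 : B = 0 := by linear_combination k1
  subst k4
  exact ⟨rfl, rfl, by linear_combination h1⟩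

/-- In an extension of `𝔽_p`, the fixed points of Frobenius are in `𝔽_p`. -/
theorem stmt_1_aux_fixed (p : ℕ) [Fact p.Prime] {K : Type*} [Field K] [Algebra (ZMod p) K]
    (r : K) (hr : r ^ p = r) : ∃ x : ZMod p, algebraMap (ZMod p) K x = r := by
  have : CharP K p := charP_of_injective_algebraMap (algebraMap (ZMod p) K).injective p
  obtain ⟨n, hn⟩ := (mem_bot_iff_intCast p K).1 ((Subfield.mem_bot_iff_pow_eq_self K p).2 hr)
  exact ⟨n, by rw [map_intCast, hn]⟩

theorem stmt_1_aux_key (p : ℕ) [Fact p.Prime] (hp : 3 < p)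
    (a b : ZMod p) (ha : a ≠ 0) (hb : b ≠ 0)
    (u : ℕ → ZMod p) (hu1 : u 1 = 0) (hu2 : u 2 = -a) (hu3 : u 3 = b)
    (hurec : ∀ n, 1 ≤ n → u (n + 3) = b * u n - a * u (n + 1))
    (hD : -4 * a ^ 3 - 27 * b ^ 2 ≠ 0)
    (h0 : u (p - 2) = 0) :
    ∃ x y z : ZMod p, x ≠ y ∧ x ≠ z ∧ y ≠ z ∧
        x ^ 3 + a * x = b ∧ y ^ 3 + a * y = b ∧ z ^ 3 + a * z = b := by
  let K := AlgebraicClosure (ZMod p)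
  let i : ZMod p →+* K := algebraMap (ZMod p) K
  have hinj : Function.Injective i := i.injective
  have : CharP K p := charP_of_injective_algebraMap hinj p
  have hpow := fun r hr => stmt_1_aux_pow (K := K) a b u hu1 hu2 hu3 hurec r hr (p - 3)
  have e1 : p - 3 + 3 = p := by omega
  have e2 : p - 3 + 1 = p - 2 := by omega
  rw [e1, e2, h0] at hpow
  generalize u (p - 3 + 2) = α at hpow
  generalize u p + a * 0 = β at hpow
  have hpow' : ∀ r : K, r ^ 3 + i a * r = i b → r ^ p = i α * r + i β := by
    intro r hr
    rw [hpow r hr, map_zero]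
    ring
  have hsmall : ∀ m : ℕ, 0 < m → m < p → (m : K) ≠ 0 := by
    intro m h1 h2 h
    exact absurd (Nat.le_of_dvd h1 ((CharP.cast_eq_zero_iff K p m).1 h)) (by omega)
  have two : (2 : K) ≠ 0 := by exact_mod_cast hsmall 2 (by omega) (by omega)
  have three : (3 : K) ≠ 0 := by exact_mod_cast hsmall 3 (by omega) (by omega)
  -- the three roots
  obtain ⟨r, hr⟩ : ∃ r : K, r ^ 3 + i a * r = i b := by
    obtain ⟨r, hr⟩ := IsAlgClosed.exists_root
      (Polynomial.X ^ 3 + Polynomial.C (i a) * Polynomial.X + Polynomial.C (-i b))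
      (by
        have : (Polynomial.X ^ 3 + Polynomial.C (i a) * Polynomial.X
          + Polynomial.C (-i b)).degree = 3 := by compute_degree!
        rw [this]; norm_num)
    refine ⟨r, ?_⟩
    simp [Polynomial.IsRoot] at hr
    linear_combination hr
  obtain ⟨d, hd⟩ := IsAlgClosed.exists_eq_mul_self (-3 * r ^ 2 - 4 * i a)
  obtain ⟨s, hs⟩ : ∃ s : K, s ^ 2 + r * s + r ^ 2 + i a = 0 := by
    refine ⟨(-r + d) / 2, ?_⟩
    have h2 : 2 * ((-r + d) / 2) = -r + d := mul_div_cancel₀ _ two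
    generalize (-r + d) / 2 = s at h2
    apply mul_left_cancel₀ (mul_ne_zero two two)
    linear_combination -hd + (2 * s + r + d) * h2
  obtain ⟨t, ht⟩ : ∃ t : K, t = -r - s := ⟨_, rfl⟩
  have hs3 : s ^ 3 + i a * s = i b := by linear_combination hr + (s - r) * hs
  have ht3 : t ^ 3 + i a * t = i b := by
    subst ht
    linear_combination hr + (-2 * r - s) * hs
  have hDK : i (-4 * a ^ 3 - 27 * b ^ 2) = ((r - s) * (r - t) * (s - t)) ^ 2 := by
    have hA : i a = -(s ^ 2 + r * s + r ^ 2) := by linear_combination hs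
    simp only [map_sub, map_mul, map_pow, map_neg, map_ofNat]
    rw [← hr, hA, ht]
    ring
  have hne : (r - s) * (r - t) * (s - t) ≠ 0 := by
    intro h
    rw [h] at hDK
    apply hD
    apply hinj
    rw [hDK, map_zero]
    ring
  have hrs : r ≠ s := by rintro h; apply hne; rw [h]; ring
  have hrt : r ≠ t := by rintro h; apply hne; rw [← h]; ring
  have hst : s ≠ t := by rintro h; apply hne; rw [h]; ring
  have hfix : ∀ x : ZMod p, i x ^ p = i x := by
    intro x; rw [← map_pow, ZMod.pow_card]
  have hfrob : ∀ x : K, x ^ 3 + i a * x = i b →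
      (3 * i α ^ 2 * i β) * x ^ 2 + (3 * i α * i β ^ 2 + i a * i α - i α ^ 3 * i a) * x
        + (i β ^ 3 + i a * i β - i b + i α ^ 3 * i b) = 0 := by
    intro x hx
    have h := congrArg (fun y => y ^ p) hx
    rw [add_pow_char, mul_pow, hfix, hfix, ← pow_mul, mul_comm 3 p, pow_mul, hpow' x hx] at h
    linear_combination h - i α ^ 3 * hx
  obtain ⟨c1, c2, c3⟩ := stmt_1_aux_quad _ _ _ r s t hrs hrt hst (hfrob r hr) (hfrob s hs3)
    (hfrob t ht3)
  have hia : i a ≠ 0 := by simpa using ha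
  have hib : i b ≠ 0 := by simpa using hb
  have hα : i α ≠ 0 := by
    intro h
    have h1 := hpow' r hr
    have h2 := hpow' s hs3
    rw [h] at h1 h2
    apply hrs
    have : (r - s) ^ p = 0 := by
      rw [sub_pow_char, h1, h2]; ring
    exact sub_eq_zero.1 (pow_eq_zero_iff (by omega) |>.1 this)
  have hβ : i β = 0 := by
    simpa [three, hα] using c1
  rw [hβ] at c2 c3
  have d2 : i α ^ 2 = 1 := by
    apply mul_left_cancel₀ (mul_ne_zero hia hα)
    linear_combination -c2
  have d3 : i α ^ 3 = 1 := by
    apply mul_left_cancel₀ hib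
    linear_combination c3
  have d1 : i α = 1 := by linear_combination d3 - i α * d2
  have hback : ∀ x : K, x ^ 3 + i a * x = i b → ∃ y : ZMod p, i y = x := by
    intro x hx
    apply stmt_1_aux_fixed
    rw [hpow' x hx, d1, hβ]; ring
  obtain ⟨x, rfl⟩ := hback r hr
  obtain ⟨y, rfl⟩ := hback s hs3
  obtain ⟨z, rfl⟩ := hback t ht3
  refine ⟨x, y, z, fun h => hrs (by rw [h]), fun h => hrt (by rw [h]), fun h => hst (by rw [h]),
    ?_, ?_, ?_⟩
  · apply hinj; simpa using hr
  · apply hinj; simpa using hs3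
  · apply hinj; simpa using ht3

/-- For a prime `p > 3`, nonzero `a b : 𝔽_p`, with `D·u_{p−2}² = 0`:
the equation `x³ + a·x = b` has three pairwise distinct solutions iff `D ≠ 0`;
moreover when `D ≠ 0` every solution `x` satisfies `3x² + a ≠ 0`. -/
theorem stmt_1 (p : ℕ) [Fact p.Prime] (hp : 3 < p)
    (a b : ZMod p) (ha : a ≠ 0) (hb : b ≠ 0)
    (u : ℕ → ZMod p) (hu1 : u 1 = 0) (hu2 : u 2 = -a) (hu3 : u 3 = b)
    (hurec : ∀ n, 1 ≤ n → u (n + 3) = b * u n - a * u (n + 1))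
    (D : ZMod p) (hD : D = -4 * a ^ 3 - 27 * b ^ 2)
    (h0 : D * u (p - 2) ^ 2 = 0) :
    ((∃ x y z : ZMod p, x ≠ y ∧ x ≠ z ∧ y ≠ z ∧
        x ^ 3 + a * x = b ∧ y ^ 3 + a * y = b ∧ z ^ 3 + a * z = b) ↔ D ≠ 0) ∧
    (D ≠ 0 → ∀ x : ZMod p, x ^ 3 + a * x = b → 3 * x ^ 2 + a ≠ 0) := by
  refine ⟨⟨?_, ?_⟩, ?_⟩
  · rintro ⟨x, y, z, hxy, hxz, hyz, hx, hy, hz⟩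
    have k1 : x ^ 2 + x * y + y ^ 2 + a = 0 := by
      apply mul_left_cancel₀ (sub_ne_zero.2 hxy)
      linear_combination hx - hy
    have k2 : x ^ 2 + x * z + z ^ 2 + a = 0 := by
      apply mul_left_cancel₀ (sub_ne_zero.2 hxz)
      linear_combination hx - hz
    have k3 : z = -x - y := by
      apply mul_left_cancel₀ (sub_ne_zero.2 hyz)
      linear_combination k1 - k2
    have hA : a = -(x ^ 2 + x * y + y ^ 2) := by linear_combination k1
    have hDD : D = ((x - y) * (x - z) * (y - z)) ^ 2 := by
      rw [hD, ← hx, k3, hA]; ring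
    rw [hDD]
    exact pow_ne_zero _ (mul_ne_zero (mul_ne_zero (sub_ne_zero.2 hxy) (sub_ne_zero.2 hxz))
      (sub_ne_zero.2 hyz))
  · intro hne
    have h1 : u (p - 2) = 0 := by simpa [hne] using h0
    exact stmt_1_aux_key p hp a b ha hb u hu1 hu2 hu3 hurec (hD ▸ hne) h1
  · intro hne x hx h
    apply hne
    have hA : a = -3 * x ^ 2 := by linear_combination h
    rw [hD, ← hx, hA]; ring
end

section
/- Let p > 3 be a prime, let a, b be nonzero elements of 𝔽_p, and suppose D·u_{p−2}² = 0. Then the equation x³ + a·x = b has exactly two distinct solutions in 𝔽_p, one of which is a root of multiplicity 2 of the polynomial x³ + a·x − b, if and only if D = 0. In that case the multiplicity-2 solution is 3b/(2a), the other solution is −3b/a, and 3·(−3b/a)² + a ≠ 0. -/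
open Polynomial

/-- For a prime `p > 3`, nonzero `a b : 𝔽_p`, with `D·u_{p−2}² = 0`:
the equation `x³ + a·x = b` has exactly two distinct solutions, one of which is a root of
multiplicity 2 of `x³ + a·x − b`, iff `D = 0`.  In that case the multiplicity-2 solution is
`3b/(2a)`, the other solution is `−3b/a`, and `3·(−3b/a)² + a ≠ 0`. -/
theorem stmt_2 (p : ℕ) [Fact p.Prime] (hp : 3 < p)
    (a b : ZMod p) (ha : a ≠ 0) (hb : b ≠ 0)
    (u : ℕ → ZMod p) (hu1 : u 1 = 0) (hu2 : u 2 = -a) (hu3 : u 3 = b)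
    (hurec : ∀ n, 1 ≤ n → u (n + 3) = b * u n - a * u (n + 1))
    (D : ZMod p) (hD : D = -4 * a ^ 3 - 27 * b ^ 2)
    (h0 : D * u (p - 2) ^ 2 = 0) :
    ((∃ x y : ZMod p, x ≠ y ∧
        {z : ZMod p | z ^ 3 + a * z = b} = {x, y} ∧
        rootMultiplicity x (X ^ 3 + C a * X - C b : (ZMod p)[X]) = 2) ↔ D = 0) ∧
    (D = 0 →
      rootMultiplicity (3 * b / (2 * a)) (X ^ 3 + C a * X - C b : (ZMod p)[X]) = 2 ∧
      (-3 * b / a) ^ 3 + a * (-3 * b / a) = b ∧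
      3 * b / (2 * a) ≠ -3 * b / a ∧
      {z : ZMod p | z ^ 3 + a * z = b} = {3 * b / (2 * a), -3 * b / a} ∧
      3 * (-3 * b / a) ^ 2 + a ≠ 0) := by
  have h2 : (2 : ZMod p) ≠ 0 := by
    intro h
    have h' : ((2 : ℕ) : ZMod p) = 0 := by exact_mod_cast h
    rw [ZMod.natCast_eq_zero_iff] at h'
    have := Nat.le_of_dvd (by norm_num) h'
    omega
  have h3 : (3 : ZMod p) ≠ 0 := by
    intro h
    have h' : ((3 : ℕ) : ZMod p) = 0 := by exact_mod_cast h
    rw [ZMod.natCast_eq_zero_iff] at h'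
    have := Nat.le_of_dvd (by norm_num) h'
    omega
  have key : D = 0 →
      rootMultiplicity (3 * b / (2 * a)) (X ^ 3 + C a * X - C b : (ZMod p)[X]) = 2 ∧
      (-3 * b / a) ^ 3 + a * (-3 * b / a) = b ∧
      3 * b / (2 * a) ≠ -3 * b / a ∧
      {z : ZMod p | z ^ 3 + a * z = b} = {3 * b / (2 * a), -3 * b / a} ∧
      3 * (-3 * b / a) ^ 2 + a ≠ 0 := by
    intro hD0
    have hE : -4 * a ^ 3 - 27 * b ^ 2 = 0 := by rw [← hD, hD0]
    have hs : -3 * b / a = -2 * (3 * b / (2 * a)) := by field_simp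
    have hr0 : 3 * b / (2 * a) ≠ 0 :=
      div_ne_zero (mul_ne_zero h3 hb) (mul_ne_zero h2 ha)
    have har : a = -3 * (3 * b / (2 * a)) ^ 2 := by
      field_simp
      linear_combination -hE
    have hbr : b = -2 * (3 * b / (2 * a)) ^ 3 := by
      field_simp
      linear_combination -hE
    rw [hs]
    generalize 3 * b / (2 * a) = r at *
    have hne : r ≠ -2 * r := by
      intro h
      exact mul_ne_zero h3 hr0 (by linear_combination h)
    subst har
    subst hbr
    refine ⟨?_, by ring, hne, ?_, ?_⟩
    · have hf : (X ^ 3 + C (-3 * r ^ 2) * X - C (-2 * r ^ 3) : (ZMod p)[X])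
          = (X - C r) ^ 2 * (X - C (-2 * r)) := by
        simp only [map_mul, map_pow, map_neg, map_ofNat]
        ring
      rw [hf, rootMultiplicity_mul (mul_ne_zero (pow_ne_zero _ (X_sub_C_ne_zero _))
        (X_sub_C_ne_zero _)), rootMultiplicity_X_sub_C_pow, rootMultiplicity_eq_zero]
      simp only [IsRoot.def, eval_sub, eval_X, eval_C]
      exact sub_ne_zero.mpr hne
    · ext z
      simp only [Set.mem_setOf_eq, Set.mem_insert_iff, Set.mem_singleton_iff]
      constructor
      · intro hz
        have hz' : (z - r) ^ 2 * (z - (-2 * r)) = 0 := by linear_combination hz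
        rcases mul_eq_zero.mp hz' with h | h
        · exact Or.inl (sub_eq_zero.mp (pow_eq_zero_iff (by norm_num) |>.mp h))
        · exact Or.inr (sub_eq_zero.mp h)
      · rintro (rfl | rfl) <;> ring
    · intro h
      exact mul_ne_zero (mul_ne_zero h3 h3) (pow_ne_zero 2 hr0) (by linear_combination h)
  refine ⟨⟨?_, fun hD0 => ?_⟩, key⟩
  · rintro ⟨x, y, -, -, hm⟩
    have hdvd := pow_rootMultiplicity_dvd (X ^ 3 + C a * X - C b : (ZMod p)[X]) x
    rw [hm] at hdvd
    obtain ⟨q, hq⟩ := hdvd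
    have e1 := congrArg (eval x) hq
    have e2 := congrArg (fun f => eval x (derivative f)) hq
    simp [derivative_pow] at e1 e2
    rw [hD]
    have ea : a = -3 * x ^ 2 := by linear_combination e2
    have eb : b = -2 * x ^ 3 := by rw [ea] at e1; linear_combination -e1
    rw [ea, eb]
    ring
  · obtain ⟨k1, -, k3, k4, -⟩ := key hD0
    exact ⟨_, _, k3, k4, k1⟩
end

section
/- Let p > 3 be a prime and let a, b be nonzero elements of 𝔽_p. If D·u_{p−2}² ≠ 0 and D·u_{p−2}² ≠ 9a², then every solution x ∈ 𝔽_p of the equation x³ + a·x = b satisfies 3x² + a ≠ 0. -/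
/-- For a prime `p > 3` and nonzero `a b : 𝔽_p`, if `D·u_{p−2}² ≠ 0` and
`D·u_{p−2}² ≠ 9a²`, then every solution `x` of `x³ + a·x = b` satisfies `3x² + a ≠ 0`. -/
theorem stmt_4 (p : ℕ) [Fact p.Prime] (hp : 3 < p)
    (a b : ZMod p) (ha : a ≠ 0) (hb : b ≠ 0)
    (u : ℕ → ZMod p) (hu1 : u 1 = 0) (hu2 : u 2 = -a) (hu3 : u 3 = b)
    (hurec : ∀ n, 1 ≤ n → u (n + 3) = b * u n - a * u (n + 1))
    (D : ZMod p) (hD : D = -4 * a ^ 3 - 27 * b ^ 2)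
    (h1 : D * u (p - 2) ^ 2 ≠ 0) (h2 : D * u (p - 2) ^ 2 ≠ 9 * a ^ 2) :
    ∀ x : ZMod p, x ^ 3 + a * x = b → 3 * x ^ 2 + a ≠ 0 := by
  intro x hx h
  apply h1
  have hA : a = -3 * x ^ 2 := by linear_combination h
  have hB : b = -2 * x ^ 3 := by rw [← hx, hA]; ring
  have hD0 : D = 0 := by rw [hD, hA, hB]; ring
  rw [hD0, zero_mul]
end

section
/- Let p > 3 be a prime and let a, b ∈ ℚ_p be nonzero with |a|_p < 1 and |b|_p = 1. Then the equation x³ + a·x = b has a solution x ∈ ℚ_p with |x|_p = 1 if and only if b_0^{(p−1)/gcd(3, p−1)} ≡ 1 (mod p). -/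
lemma cube_aux (p : ℕ) [Fact p.Prime] (c : ZMod p) (hc : c ≠ 0) :
    (∃ y : ZMod p, y ^ 3 = c) ↔ c ^ ((p - 1) / Nat.gcd 3 (p - 1)) = 1 := by
  have hp1 : 0 < p - 1 := Nat.sub_pos_of_lt (Fact.out : p.Prime).one_lt
  have hg : 0 < Nat.gcd 3 (p - 1) := Nat.gcd_pos_of_pos_right _ hp1
  constructor
  · rintro ⟨y, rfl⟩
    have hy : y ≠ 0 := by
      rintro rfl
      simp at hc
    obtain ⟨k, hk⟩ := Nat.gcd_dvd_left 3 (p - 1)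
    obtain ⟨m, hm⟩ := Nat.gcd_dvd_right 3 (p - 1)
    have h2 : (p - 1) / Nat.gcd 3 (p - 1) = m := Nat.div_eq_of_eq_mul_right hg hm
    have h3 : 3 * m = (p - 1) * k := by
      calc 3 * m = (Nat.gcd 3 (p - 1) * k) * m := by rw [← hk]
        _ = (Nat.gcd 3 (p - 1) * m) * k := by ring
        _ = _ := by rw [← hm]
    rw [h2, ← pow_mul, h3, pow_mul, ZMod.pow_card_sub_one_eq_one hy, one_pow]
  · intro h
    obtain ⟨u, hu⟩ := IsCyclic.exists_generator (α := (ZMod p)ˣ)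
    obtain ⟨k, hk⟩ := Subgroup.mem_zpowers_iff.mp (hu (Units.mk0 c hc))
    have ho : orderOf u = p - 1 := by
      rw [orderOf_eq_card_of_forall_mem_zpowers hu, Nat.card_eq_fintype_card, ZMod.card_units]
    obtain ⟨m, hm⟩ := Nat.gcd_dvd_right 3 (p - 1)
    have h2 : (p - 1) / Nat.gcd 3 (p - 1) = m := Nat.div_eq_of_eq_mul_right hg hm
    rw [h2] at h
    have hm0 : (m : ℤ) ≠ 0 := by
      rintro h0
      have : m = 0 := by exact_mod_cast h0
      subst this
      omega
    have h4 : u ^ (k * (m : ℤ)) = 1 := by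
      rw [zpow_mul, hk, zpow_natCast]
      ext
      simpa using h
    have h5 := orderOf_dvd_iff_zpow_eq_one.mpr h4
    rw [ho, hm, Nat.cast_mul] at h5
    obtain ⟨j, hj⟩ := Int.dvd_of_mul_dvd_mul_right hm0 h5
    have hb := Nat.gcd_eq_gcd_ab 3 (p - 1)
    set s := Nat.gcdA 3 (p - 1)
    set t := Nat.gcdB 3 (p - 1)
    have hu1 : u ^ (((p - 1 : ℕ) : ℤ)) = 1 := by
      rw [zpow_natCast, ← ho, pow_orderOf_eq_one]
    have h6 : (u ^ (s * j)) ^ 3 = Units.mk0 c hc := by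
      rw [← hk, hj, hb, ← zpow_natCast, ← zpow_mul,
        show (((3 : ℕ) : ℤ) * s + ((p - 1 : ℕ) : ℤ) * t) * j
          = s * j * ((3 : ℕ) : ℤ) + ((p - 1 : ℕ) : ℤ) * (t * j) by ring, zpow_add,
        zpow_mul u ((p - 1 : ℕ) : ℤ), hu1, one_zpow, mul_one]
    refine ⟨((u ^ (s * j) : (ZMod p)ˣ) : ZMod p), ?_⟩
    have := congrArg Units.val h6
    simpa using this

lemma toZMod_zero_iff (p : ℕ) [Fact p.Prime] (x : ℤ_[p]) :
    PadicInt.toZMod x = 0 ↔ ‖x‖ < 1 := by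
  rw [← RingHom.mem_ker, PadicInt.ker_toZMod, IsLocalRing.mem_maximalIdeal,
    PadicInt.mem_nonunits]

/-- For a prime `p > 3` and nonzero `a b : ℚ_p` with `|a|_p < 1`, `|b|_p = 1`:
the equation `x³ + a·x = b` has a solution with `|x|_p = 1` iff
`b₀^((p−1)/gcd(3,p−1)) ≡ 1 (mod p)`, where `b₀` is the first digit of `b`. -/
theorem stmt_6 (p : ℕ) [Fact p.Prime] (hp : 3 < p)
    (a b : ℚ_[p]) (ha : a ≠ 0) (hb : b ≠ 0)
    (hna : ‖a‖ < 1) (hnb : ‖b‖ = 1)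
    (b0 : ℕ) (hb0l : 1 ≤ b0) (hb0u : b0 < p)
    (hdigit : ‖b * (p : ℚ_[p]) ^ (-b.valuation) - (b0 : ℚ_[p])‖ < 1) :
    (∃ x : ℚ_[p], ‖x‖ = 1 ∧ x ^ 3 + a * x = b) ↔
      (b0 : ZMod p) ^ ((p - 1) / Nat.gcd 3 (p - 1)) = 1 := by
  have hv : b.valuation = 0 := by
    have h := Padic.norm_eq_zpow_neg_valuation hb
    rw [hnb] at h
    have hp1 : (1 : ℝ) < p := by exact_mod_cast (Fact.out : p.Prime).one_lt
    have := (zpow_eq_one_iff_right₀ (by linarith) hp1.ne').mp h.symm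
    omega
  rw [hv, neg_zero, zpow_zero, mul_one] at hdigit
  let A : ℤ_[p] := ⟨a, hna.le⟩
  let B : ℤ_[p] := ⟨b, hnb.le⟩
  have hA : PadicInt.toZMod A = 0 := (toZMod_zero_iff p A).mpr hna
  have hB : PadicInt.toZMod B = (b0 : ZMod p) := by
    have h : PadicInt.toZMod (B - (b0 : ℤ_[p])) = 0 := by
      rw [toZMod_zero_iff, PadicInt.norm_def]
      push_cast
      exact hdigit
    rw [map_sub, map_natCast] at h
    exact sub_eq_zero.mp h
  have hc : (b0 : ZMod p) ≠ 0 := by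
    rw [Ne, ZMod.natCast_eq_zero_iff]
    exact Nat.not_dvd_of_pos_of_lt hb0l hb0u
  rw [← cube_aux p _ hc]
  constructor
  · rintro ⟨x, hx, he⟩
    let X : ℤ_[p] := ⟨x, hx.le⟩
    have hX : X ^ 3 + A * X = B := by
      apply Subtype.ext
      push_cast
      exact he
    refine ⟨PadicInt.toZMod X, ?_⟩
    rw [← hB, ← hX]
    simp [hA]
  · rintro ⟨y, hy⟩
    obtain ⟨z, rfl⟩ := ZMod.ringHom_surjective (PadicInt.toZMod (p := p)) y
    have hz : PadicInt.toZMod z ≠ 0 := by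
      intro h
      rw [h] at hy
      apply hc
      rw [← hy]
      simp
    have h3 : (3 : ZMod p) ≠ 0 := by
      have : ((3 : ℕ) : ZMod p) ≠ 0 := by
        rw [Ne, ZMod.natCast_eq_zero_iff]
        exact Nat.not_dvd_of_pos_of_lt (by norm_num) hp
      exact_mod_cast this
    let F : Polynomial ℤ_[p] :=
      Polynomial.X ^ 3 + Polynomial.C A * Polynomial.X - Polynomial.C B
    have hF : ∀ w, F.aeval w = w ^ 3 + A * w - B := by
      intro w
      simp [F]
    have hF' : F.derivative.aeval z = 3 * z ^ 2 + A := by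
      simp [F]
      left
      norm_num
    have hd : ‖F.derivative.aeval z‖ = 1 := by
      rw [hF']
      apply le_antisymm (PadicInt.norm_le_one _)
      rw [← not_lt, ← toZMod_zero_iff]
      have h33 : PadicInt.toZMod (3 : ℤ_[p]) = (3 : ZMod p) := map_ofNat _ 3
      rw [map_add, map_mul, map_pow, h33, hA, add_zero]
      exact mul_ne_zero h3 (pow_ne_zero 2 hz)
    have hn : ‖F.aeval z‖ < ‖F.derivative.aeval z‖ ^ 2 := by
      rw [hd, hF, one_pow, ← toZMod_zero_iff]
      simp [hA, hB, hy]
    obtain ⟨w, hw, hwz, -, -⟩ := hensels_lemma hn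
    rw [hd, ← toZMod_zero_iff, map_sub, sub_eq_zero] at hwz
    rw [hF, sub_eq_zero] at hw
    refine ⟨w, ?_, ?_⟩
    · rw [← PadicInt.norm_def]
      apply le_antisymm (PadicInt.norm_le_one _)
      rw [← not_lt, ← toZMod_zero_iff, hwz]
      exact hz
    · have := congrArg Subtype.val hw
      push_cast at this
      exact this
end

section
/- Let p > 3 be a prime and let a, b ∈ ℚ_p be nonzero with |a|_p < 1 and |b|_p = 1. If p ≡ 1 (mod 3) and b_0^{(p−1)/3} ≡ 1 (mod p), then the equation x³ + a·x = b has exactly three distinct solutions x ∈ ℚ_p with |x|_p = 1. If p ≡ 2 (mod 3), then it has exactly one solution x ∈ ℚ_p with |x|_p = 1. -/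
open Polynomial in
lemma aux_norm {p : ℕ} [Fact p.Prime] (x : ℤ_[p]) : PadicInt.toZMod x = 0 ↔ ‖x‖ < 1 := by
  rw [← RingHom.mem_ker, PadicInt.ker_toZMod, IsLocalRing.mem_maximalIdeal, PadicInt.mem_nonunits]

lemma aux_norm1 {p : ℕ} [Fact p.Prime] (x : ℤ_[p]) : PadicInt.toZMod x ≠ 0 ↔ ‖x‖ = 1 := by
  rw [Ne, aux_norm, not_lt]
  exact ⟨fun h => le_antisymm (PadicInt.norm_le_one x) h, fun h => h.ge⟩

lemma aux_three_s10 {p : ℕ} [Fact p.Prime] (hp : 3 < p) : (3 : ZMod p) ≠ 0 := by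
  intro h
  have h' : ((3 : ℕ) : ZMod p) = 0 := by exact_mod_cast h
  rw [ZMod.natCast_eq_zero_iff] at h'
  exact absurd (Nat.le_of_dvd (by norm_num) h') (by omega)

open Polynomial in
lemma aux_lift {p : ℕ} [Fact p.Prime] (hp : 3 < p) (A B : ℤ_[p]) (hA : PadicInt.toZMod A = 0)
    (c : ZMod p) (hc : c ≠ 0) (h : c ^ 3 = PadicInt.toZMod B) :
    ∃ x : ℤ_[p], x ^ 3 + A * x = B ∧ PadicInt.toZMod x = c := by
  obtain ⟨t, rfl⟩ := ZMod.ringHom_surjective (PadicInt.toZMod (p := p)) c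
  let F : ℤ_[p][X] := X ^ 3 + C A * X - C B
  have h1 : ∀ y, F.aeval y = y ^ 3 + A * y - B := by intro y; simp [F]
  have h2 : F.derivative.aeval t = 3 * t ^ 2 + A := by
    simp [F]
    left; norm_num
  have hd : ‖F.derivative.aeval t‖ = 1 := by
    rw [← aux_norm1, h2]
    have h3 : PadicInt.toZMod (3 : ℤ_[p]) = 3 := map_ofNat _ 3
    simp [hA, hc, h3, aux_three_s10 hp]
  have hn : ‖F.aeval t‖ < 1 := by
    rw [← aux_norm, h1]; simp [hA, h]
  obtain ⟨z, hz, hzt, -, -⟩ := hensels_lemma (F := F) (a := t) (by rw [hd]; simpa using hn)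
  refine ⟨z, ?_, ?_⟩
  · rw [h1] at hz; exact sub_eq_zero.mp hz
  · rw [hd, ← aux_norm, map_sub] at hzt
    exact sub_eq_zero.mp hzt

lemma aux_uniq {p : ℕ} [Fact p.Prime] (hp : 3 < p) (A B : ℤ_[p]) (hA : PadicInt.toZMod A = 0)
    (x y : ℤ_[p]) (hx : x ^ 3 + A * x = B) (hy : y ^ 3 + A * y = B)
    (hxy : PadicInt.toZMod x = PadicInt.toZMod y) (h0 : PadicInt.toZMod x ≠ 0) : x = y := by
  have : (x - y) * (x ^ 2 + x * y + y ^ 2 + A) = 0 := by linear_combination hx - hy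
  rcases mul_eq_zero.mp this with h | h
  · exact sub_eq_zero.mp h
  · exfalso
    have h' := congrArg (PadicInt.toZMod (p := p)) h
    simp only [map_add, map_mul, map_pow, map_zero, hA, ← hxy] at h'
    have : (3 : ZMod p) * PadicInt.toZMod x ^ 2 = 0 := by linear_combination h'
    simp [h0, aux_three_s10 hp] at this

lemma aux_cyc {p : ℕ} [Fact p.Prime] (k : ℕ) (hk : p = 3 * k + 1) (u : ZMod p) (hu : u ≠ 0)
    (h : u ^ k = 1) : ∃ c w : ZMod p, c ^ 3 = u ∧ w ^ 3 = 1 ∧ w ≠ 1 := by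
  have hk0 : 0 < k := by
    have := (Fact.out : p.Prime).two_le
    omega
  obtain ⟨g, hg⟩ := IsCyclic.exists_generator (α := (ZMod p)ˣ)
  have ho : orderOf g = 3 * k := by
    rw [orderOf_eq_card_of_forall_mem_zpowers hg, Nat.card_eq_fintype_card, ZMod.card_units]
    omega
  have hmem := hg (Units.mk0 u hu)
  rw [mem_zpowers_iff_mem_range_orderOf] at hmem
  simp only [Finset.mem_image] at hmem
  obtain ⟨n, -, hn⟩ := hmem
  have h1 : (g ^ n) ^ k = 1 := by
    rw [hn]; ext; simpa using h
  rw [← pow_mul] at h1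
  have h2 := orderOf_dvd_of_pow_eq_one h1
  rw [ho] at h2
  obtain ⟨m, rfl⟩ := Nat.dvd_of_mul_dvd_mul_right hk0 h2
  refine ⟨((g ^ m : (ZMod p)ˣ) : ZMod p), ((g ^ k : (ZMod p)ˣ) : ZMod p), ?_, ?_, ?_⟩
  · rw [← Units.val_pow_eq_pow_val, ← pow_mul, mul_comm m 3, hn]; rfl
  · rw [← Units.val_pow_eq_pow_val, ← pow_mul, mul_comm k 3, ← ho, pow_orderOf_eq_one]; rfl
  · intro hh
    have h3 : g ^ k = 1 := by ext; simpa using hh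
    have := Nat.le_of_dvd hk0 (orderOf_dvd_of_pow_eq_one h3)
    omega


/-- For a prime `p > 3` and nonzero `a b : ℚ_p` with `|a|_p < 1`, `|b|_p = 1`:
if `p ≡ 1 (mod 3)` and `b₀^((p−1)/3) ≡ 1 (mod p)` then `x³ + a·x = b` has exactly three
distinct solutions with `|x|_p = 1`; if `p ≡ 2 (mod 3)` then it has exactly one such
solution. -/
theorem stmt_10 (p : ℕ) [Fact p.Prime] (hp : 3 < p)
    (a b : ℚ_[p]) (ha : a ≠ 0) (hb : b ≠ 0)
    (hna : ‖a‖ < 1) (hnb : ‖b‖ = 1)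
    (b0 : ℕ) (hb0l : 1 ≤ b0) (hb0u : b0 < p)
    (hdigit : ‖b * (p : ℚ_[p]) ^ (-b.valuation) - (b0 : ℚ_[p])‖ < 1) :
    (p % 3 = 1 → (b0 : ZMod p) ^ ((p - 1) / 3) = 1 →
      ∃ x y z : ℚ_[p], x ≠ y ∧ x ≠ z ∧ y ≠ z ∧
        (‖x‖ = 1 ∧ x ^ 3 + a * x = b) ∧
        (‖y‖ = 1 ∧ y ^ 3 + a * y = b) ∧
        (‖z‖ = 1 ∧ z ^ 3 + a * z = b) ∧
        (∀ w : ℚ_[p], ‖w‖ = 1 → w ^ 3 + a * w = b → w = x ∨ w = y ∨ w = z)) ∧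
    (p % 3 = 2 → ∃! x : ℚ_[p], ‖x‖ = 1 ∧ x ^ 3 + a * x = b) := by
  have hval : b.valuation = 0 := by
    have h := Padic.norm_eq_zpow_neg_valuation hb
    rw [hnb] at h
    have hp1 : (1 : ℝ) < p := by exact_mod_cast (show 1 < p by omega)
    have := (zpow_eq_one_iff_right₀ (by linarith) hp1.ne').mp h.symm
    omega
  rw [hval] at hdigit
  simp only [neg_zero, zpow_zero, mul_one] at hdigit
  obtain ⟨A, rfl⟩ : ∃ A : ℤ_[p], (A : ℚ_[p]) = a := ⟨⟨a, hna.le⟩, rfl⟩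
  obtain ⟨B, rfl⟩ : ∃ B : ℤ_[p], (B : ℚ_[p]) = b := ⟨⟨b, hnb.le⟩, rfl⟩
  have hA : PadicInt.toZMod A = 0 := (aux_norm A).mpr hna
  have hB : PadicInt.toZMod B = (b0 : ZMod p) := by
    have : PadicInt.toZMod (B - (b0 : ℤ_[p])) = 0 := by
      rw [aux_norm, PadicInt.norm_def]; simpa using hdigit
    rw [map_sub, map_natCast] at this
    exact sub_eq_zero.mp this
  have hB0 : (b0 : ZMod p) ≠ 0 := by
    rw [← hB]; exact (aux_norm1 B).mpr hnb
  have lift : ∀ c : ZMod p, c ^ 3 = b0 → ∃ x : ℤ_[p],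
      (‖(x : ℚ_[p])‖ = 1 ∧ (x : ℚ_[p]) ^ 3 + A * x = B) ∧ PadicInt.toZMod x = c := by
    intro c hc
    have hc0 : c ≠ 0 := by
      rintro rfl
      exact hB0 (by rw [← hc]; simp)
    obtain ⟨x, hx, hxc⟩ := aux_lift hp A B hA c hc0 (by rw [hc, hB])
    exact ⟨x, ⟨(aux_norm1 x).mp (by rwa [hxc]), by rw [← hx]; push_cast; rfl⟩, hxc⟩
  have uniq : ∀ w : ℚ_[p], ‖w‖ = 1 → w ^ 3 + A * w = B → ∃ c : ZMod p, c ^ 3 = b0 ∧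
      ∀ x : ℤ_[p], (x : ℚ_[p]) ^ 3 + A * x = B → PadicInt.toZMod x = c → w = x := by
    intro w hw hwe
    obtain ⟨W, rfl⟩ : ∃ W : ℤ_[p], (W : ℚ_[p]) = w := ⟨⟨w, hw.le⟩, rfl⟩
    have hW : W ^ 3 + A * W = B := Subtype.coe_injective (by simpa using hwe)
    refine ⟨PadicInt.toZMod W, ?_, ?_⟩
    · rw [← hB, ← hW]; simp [hA]
    · intro x hx hxc
      have hx' : x ^ 3 + A * x = B := Subtype.coe_injective (by simpa using hx)
      rw [aux_uniq hp A B hA W x hW hx' hxc.symm ((aux_norm1 W).mpr hw)]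
  constructor
  · intro hp3 hpow
    obtain ⟨k, hk⟩ : ∃ k, p = 3 * k + 1 := ⟨p / 3, by omega⟩
    rw [show (p - 1) / 3 = k by omega] at hpow
    obtain ⟨c, w, hc, hw, hw1⟩ := aux_cyc k hk _ hB0 hpow
    have hc0 : c ≠ 0 := by
      rintro rfl
      exact hB0 (by rw [← hc]; simp)
    have hw1' : w - 1 ≠ 0 := sub_ne_zero.mpr hw1
    have hw0 : w ≠ 0 := by
      rintro rfl
      simp at hw
    have hq : w ^ 2 + w + 1 = 0 := by
      apply mul_left_cancel₀ hw1'
      linear_combination hw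
    obtain ⟨x, hx, hxc⟩ := lift c hc
    obtain ⟨y, hy, hyc⟩ := lift (w * c) (by rw [mul_pow, hw, hc, one_mul])
    obtain ⟨z, hz, hzc⟩ := lift (w * (w * c)) (by rw [mul_pow, mul_pow, hw, hc, one_mul, one_mul])
    refine ⟨x, y, z, ?_, ?_, ?_, hx, hy, hz, ?_⟩
    · intro h
      rw [Subtype.coe_injective h, hyc] at hxc
      exact mul_ne_zero hw1' hc0 (by linear_combination hxc)
    · intro h
      rw [Subtype.coe_injective h, hzc] at hxc
      exact mul_ne_zero hw1' hc0 (by linear_combination c * hw - w * hxc)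
    · intro h
      rw [Subtype.coe_injective h, hzc] at hyc
      exact mul_ne_zero hw1' (mul_ne_zero hw0 hc0) (by linear_combination hyc)
    · intro t ht hte
      obtain ⟨d, hd, hu⟩ := uniq t ht hte
      have : (d - c) * ((d - w * c) * (d - w * (w * c))) = 0 := by
        linear_combination hd - hc + (- d ^ 2 * c + d * c ^ 2 * w) * hq - c ^ 3 * hw
      rcases mul_eq_zero.mp this with h | h
      · exact Or.inl (hu x hx.2 (by rw [hxc]; exact (sub_eq_zero.mp h).symm))
      rcases mul_eq_zero.mp h with h | h
      · exact Or.inr (Or.inl (hu y hy.2 (by rw [hyc]; exact (sub_eq_zero.mp h).symm)))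
      · exact Or.inr (Or.inr (hu z hz.2 (by rw [hzc]; exact (sub_eq_zero.mp h).symm)))
  · intro hp3
    obtain ⟨k, hk⟩ : ∃ k, p = 3 * k + 2 := ⟨p / 3, by omega⟩
    have key : ∀ u : ZMod p, u ≠ 0 → (u ^ (2 * k + 1)) ^ 3 = u := by
      intro u hu
      have h := ZMod.pow_card_sub_one_eq_one hu
      rw [← pow_mul, show (2 * k + 1) * 3 = (p - 1) * 2 + 1 by omega, pow_succ, pow_mul, h]
      simp
    obtain ⟨x, hx, hxc⟩ := lift ((b0 : ZMod p) ^ (2 * k + 1)) (key _ hB0)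
    refine ⟨x, hx, ?_⟩
    rintro t ⟨ht, hte⟩
    obtain ⟨d, hd, hu⟩ := uniq t ht hte
    have hd0 : d ≠ 0 := by
      rintro rfl
      exact hB0 (by rw [← hd]; simp)
    apply hu x hx.2
    rw [hxc, ← hd, ← pow_mul, mul_comm, pow_mul, key d hd0]
end

section
/- Let p > 3 be a prime, let a, b ∈ ℚ_p be nonzero with |a|_p = |b|_p = 1, let D = −4a³ − 27b², and suppose 0 < |D|_p < 1. Let d_0 be the first digit of D and v_p(D) its p-adic valuation. If v_p(D) is even and d_0^{(p−1)/2} ≡ 1 (mod p), then the equation x³ + a·x = b has exactly three distinct solutions x ∈ ℚ_p with |x|_p = 1. If v_p(D) is even and d_0^{(p−1)/2} ≢ 1 (mod p), or if v_p(D) is odd, then it has exactly one solution x ∈ ℚ_p with |x|_p = 1. -/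
section helpers
variable {p : ℕ} [Fact p.Prime]

theorem h12_nat_norm (n : ℕ) (h : ¬ p ∣ n) : ‖(n : ℚ_[p])‖ = 1 := by
  exact Padic.norm_natCast_eq_one_iff.2 (((Fact.out : p.Prime).coprime_iff_not_dvd).2 h)

theorem h12_le_one {x y : ℚ_[p]} (hx : ‖x‖ ≤ 1) (hy : ‖y‖ ≤ 1) : ‖x + y‖ ≤ 1 :=
  (Padic.nonarchimedean x y).trans (max_le hx hy)

theorem h12_lt_one {x y : ℚ_[p]} (hx : ‖x‖ < 1) (hy : ‖y‖ < 1) : ‖x + y‖ < 1 :=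
  (Padic.nonarchimedean x y).trans_lt (max_lt hx hy)

theorem h12_unit {a b w : ℚ_[p]} (ha : ‖a‖ = 1) (hb : ‖b‖ = 1) (hw : ‖w‖ ≤ 1)
    (h : w ^ 3 + a * w = b) : ‖w‖ = 1 := by
  refine le_antisymm hw ?_
  have h1 : ‖w ^ 2 + a‖ ≤ 1 := h12_le_one (by rw [norm_pow]; exact pow_le_one₀ (norm_nonneg _) hw) ha.le
  have h2 : ‖w‖ * ‖w ^ 2 + a‖ = 1 := by
    rw [← norm_mul, ← hb, ← h]; congr 1; ring
  nlinarith [norm_nonneg w]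

theorem h12_root (hp : 3 < p) {a b D : ℚ_[p]} (hna : ‖a‖ = 1) (hnb : ‖b‖ = 1)
    (hD : D = -4 * a ^ 3 - 27 * b ^ 2) (hD1 : ‖D‖ < 1) :
    ∃ z : ℚ_[p], ‖z‖ = 1 ∧ z ^ 3 + a * z = b := by
  have ha : a ≠ 0 := by rintro rfl; simp at hna
  have h3 : ‖(3 : ℚ_[p])‖ = 1 := by
    exact_mod_cast h12_nat_norm 3 (fun h => by have := Nat.le_of_dvd (by norm_num) h; omega)
  let A : ℤ_[p] := ⟨a, hna.le⟩
  let B : ℤ_[p] := ⟨b, hnb.le⟩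
  let S : ℤ_[p] := ⟨-3 * b / a, by simp [hna, hnb, h3]⟩
  let F : Polynomial ℤ_[p] := Polynomial.X ^ 3 + Polynomial.C A * Polynomial.X - Polynomial.C B
  have hF : ∀ x : ℤ_[p], F.aeval x = x ^ 3 + A * x - B := by intro x; simp [F]
  have hF' : F.derivative.aeval S = 3 * S ^ 2 + A := by
    simp [F]; left; norm_num
  have e1 : ‖F.aeval S‖ < 1 := by
    rw [hF, PadicInt.norm_def]
    have : ((S ^ 3 + A * S - B : ℤ_[p]) : ℚ_[p]) = b * D / a ^ 3 := by
      push_cast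
      simp only [S, A, B]
      rw [hD]; field_simp; ring
    rw [this]; simp [hna, hnb, hD1]
  have e2 : ‖F.derivative.aeval S‖ = 1 := by
    rw [hF', PadicInt.norm_def]
    have : ((3 * S ^ 2 + A : ℤ_[p]) : ℚ_[p]) = (-(3 * a ^ 3) + -D) / a ^ 2 := by
      have h3' : ((3 : ℤ_[p]) : ℚ_[p]) = 3 := by exact_mod_cast PadicInt.coe_natCast (p := p) 3
      push_cast
      rw [h3']
      simp only [S, A]
      rw [hD]; field_simp
      ring
    rw [this]
    have hn : ‖-(3 * a ^ 3)‖ = 1 := by simp [hna, h3]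
    have : ‖-(3 * a ^ 3) + -D‖ = 1 := by
      rw [Padic.add_eq_max_of_ne (by rw [hn, norm_neg]; exact hD1.ne'), hn, norm_neg]
      exact max_eq_left hD1.le
    rw [norm_div, this, norm_pow, hna]; norm_num
  obtain ⟨z, hz, -⟩ := hensels_lemma (F := F) (a := S) (by rw [e2]; simpa using e1)
  rw [hF] at hz
  have hz' : (z : ℚ_[p]) ^ 3 + a * z = b := by
    have := congrArg (fun t : ℤ_[p] => (t : ℚ_[p])) hz
    push_cast at this
    exact sub_eq_zero.1 this
  exact ⟨z, h12_unit hna hnb z.2 hz', hz'⟩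

theorem h12_zmod {x y : ℤ_[p]} (h : ‖x - y‖ < 1) : PadicInt.toZMod x = PadicInt.toZMod y := by
  rw [← sub_eq_zero, ← map_sub, ← RingHom.mem_ker, PadicInt.ker_toZMod,
    IsLocalRing.mem_maximalIdeal]
  exact PadicInt.mem_nonunits.2 h

theorem h12_zmod_rev {x y : ℤ_[p]} (h : PadicInt.toZMod x = PadicInt.toZMod y) : ‖x - y‖ < 1 := by
  rw [← sub_eq_zero, ← map_sub, ← RingHom.mem_ker, PadicInt.ker_toZMod,
    IsLocalRing.mem_maximalIdeal] at h
  exact PadicInt.mem_nonunits.1 h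

theorem h12_norm_unit {D : ℚ_[p]} (hD : D ≠ 0) : ‖D * (p : ℚ_[p]) ^ (-D.valuation)‖ = 1 := by
  have hp0 : (p : ℝ) ≠ 0 := by exact_mod_cast (Fact.out : p.Prime).ne_zero
  rw [norm_mul, Padic.norm_eq_zpow_neg_valuation hD, Padic.norm_p_zpow, ← zpow_add₀ hp0]
  simp

theorem h12_euler (d0 : ℕ) (hp : 3 < p) (h1 : 1 ≤ d0) (h2 : d0 < p) :
    (d0 : ZMod p) ^ ((p - 1) / 2) = 1 ↔ IsSquare (d0 : ZMod p) := by
  have hd : (d0 : ZMod p) ≠ 0 := by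
    rw [Ne, ZMod.natCast_eq_zero_iff]
    intro h; have := Nat.le_of_dvd h1 h; omega
  have ho := (Fact.out : p.Prime).eq_two_or_odd
  rw [ZMod.euler_criterion p hd, show (p - 1) / 2 = p / 2 by omega]

theorem h12_sq (hp : 3 < p) {D : ℚ_[p]} (hD : D ≠ 0) (d0 : ℕ) (h1 : 1 ≤ d0) (h2 : d0 < p)
    (hdigit : ‖D * (p : ℚ_[p]) ^ (-D.valuation) - (d0 : ℚ_[p])‖ < 1) :
    IsSquare D ↔ Even D.valuation ∧ (d0 : ZMod p) ^ ((p - 1) / 2) = 1 := by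
  have hpQ : (p : ℚ_[p]) ≠ 0 := by exact_mod_cast (Fact.out : p.Prime).ne_zero
  rw [h12_euler d0 hp h1 h2]
  let U : ℤ_[p] := ⟨D * (p : ℚ_[p]) ^ (-D.valuation), (h12_norm_unit hD).le⟩
  have hU : PadicInt.toZMod U = (d0 : ZMod p) := by
    rw [← map_natCast (PadicInt.toZMod (p := p)) d0]
    apply h12_zmod
    rw [PadicInt.norm_def]
    push_cast
    exact hdigit
  constructor
  · rintro ⟨t, ht⟩
    have ht0 : t ≠ 0 := by rintro rfl; simp at ht; exact hD ht
    have hv : D.valuation = t.valuation + t.valuation := by rw [ht, Padic.valuation_mul ht0 ht0]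
    refine ⟨⟨_, hv⟩, ?_⟩
    let T : ℤ_[p] := ⟨t * (p : ℚ_[p]) ^ (-t.valuation), (h12_norm_unit ht0).le⟩
    have : U = T * T := by
      apply Subtype.ext
      rw [PadicInt.coe_mul]
      change D * (p : ℚ_[p]) ^ (-D.valuation) =
        (t * (p : ℚ_[p]) ^ (-t.valuation)) * (t * (p : ℚ_[p]) ^ (-t.valuation))
      rw [hv, neg_add, zpow_add₀ hpQ, ht]
      ring
    exact ⟨PadicInt.toZMod T, by rw [← hU, this, map_mul]⟩
  · rintro ⟨⟨k, hk⟩, c, hc⟩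
    have hd : (d0 : ZMod p) ≠ 0 := by
      rw [Ne, ZMod.natCast_eq_zero_iff]
      intro h; have := Nat.le_of_dvd h1 h; omega
    have hc0 : c ≠ 0 := by rintro rfl; simp at hc; exact hd hc
    let C : ℤ_[p] := (c.val : ℤ_[p])
    have hC : PadicInt.toZMod C = c := by simp [C]
    let F : Polynomial ℤ_[p] := Polynomial.X ^ 2 - Polynomial.C U
    have hF : ∀ x : ℤ_[p], F.aeval x = x ^ 2 - U := by intro x; simp [F]
    have hF' : F.derivative.aeval C = 2 * C := by
      simp [F]; left; norm_num
    have e1 : ‖F.aeval C‖ < 1 := by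
      rw [hF]
      apply h12_zmod_rev
      rw [map_pow, hC, hU, hc, sq]
    have e2 : ‖F.derivative.aeval C‖ = 1 := by
      rw [hF']
      refine le_antisymm (PadicInt.norm_le_one _) ?_
      by_contra hlt
      push Not at hlt
      have := h12_zmod (x := 2 * C) (y := 0) (by simpa using hlt)
      rw [map_mul, hC, map_zero, map_ofNat] at this
      rcases mul_eq_zero.1 this with h | h
      · have h' : ((2 : ℕ) : ZMod p) = 0 := by exact_mod_cast h
        rw [ZMod.natCast_eq_zero_iff] at h'
        have := Nat.le_of_dvd (by norm_num) h'; omega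
      · exact hc0 h
    obtain ⟨z, hz, -⟩ := hensels_lemma (F := F) (a := C) (by rw [e2]; simpa using e1)
    rw [hF] at hz
    have hz' : (z : ℚ_[p]) ^ 2 = D * (p : ℚ_[p]) ^ (-D.valuation) := by
      have := congrArg (fun t : ℤ_[p] => (t : ℚ_[p])) hz
      push_cast at this
      exact sub_eq_zero.1 this
    refine ⟨z * (p : ℚ_[p]) ^ k, ?_⟩
    calc D = (D * (p : ℚ_[p]) ^ (-D.valuation)) * (p : ℚ_[p]) ^ (D.valuation) := by
          rw [mul_assoc, ← zpow_add₀ hpQ]; simp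
      _ = _ := by rw [← hz', hk, zpow_add₀ hpQ]; ring

theorem h12_unique {a b D z : ℚ_[p]} (hD : D = -4 * a ^ 3 - 27 * b ^ 2)
    (hz1 : ‖z‖ = 1) (hz : z ^ 3 + a * z = b) (hsq : ¬ IsSquare D) :
    ∃! x : ℚ_[p], ‖x‖ = 1 ∧ x ^ 3 + a * x = b := by
  refine ⟨z, ⟨hz1, hz⟩, ?_⟩
  rintro w ⟨-, hw⟩
  by_contra hne
  have hq : w ^ 2 + z * w + z ^ 2 + a = 0 := by
    apply mul_left_cancel₀ (sub_ne_zero.2 hne)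
    linear_combination hw - hz
  apply hsq
  refine ⟨(2 * w + z) * (3 * z ^ 2 + a), ?_⟩
  rw [hD, ← hz]
  linear_combination (-4) * (3 * z ^ 2 + a) ^ 2 * hq

theorem h12_three (hp : 3 < p) {a b D z : ℚ_[p]} (hna : ‖a‖ = 1) (hnb : ‖b‖ = 1)
    (hD : D = -4 * a ^ 3 - 27 * b ^ 2) (hD0 : D ≠ 0)
    (hz1 : ‖z‖ = 1) (hz : z ^ 3 + a * z = b) (hsq : IsSquare D) :
    ∃ x y z : ℚ_[p], x ≠ y ∧ x ≠ z ∧ y ≠ z ∧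
        (‖x‖ = 1 ∧ x ^ 3 + a * x = b) ∧
        (‖y‖ = 1 ∧ y ^ 3 + a * y = b) ∧
        (‖z‖ = 1 ∧ z ^ 3 + a * z = b) ∧
        (∀ w : ℚ_[p], ‖w‖ = 1 → w ^ 3 + a * w = b → w = x ∨ w = y ∨ w = z) := by
  obtain ⟨t, ht⟩ := hsq
  have hDz : D = (-3 * z ^ 2 - 4 * a) * (3 * z ^ 2 + a) ^ 2 := by rw [hD, ← hz]; ring
  have hf : 3 * z ^ 2 + a ≠ 0 := by intro h; rw [h] at hDz; simp at hDz; exact hD0 hDz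
  obtain ⟨s, hs⟩ : ∃ s, s ^ 2 = -3 * z ^ 2 - 4 * a := by
    refine ⟨t / (3 * z ^ 2 + a), ?_⟩
    rw [div_pow, div_eq_iff (pow_ne_zero 2 hf), ← hDz, ht, sq]
  have hs0 : s ≠ 0 := by
    rintro rfl
    apply hD0; rw [hDz, ← hs]; ring
  have h2 : ‖(2 : ℚ_[p])‖ = 1 := by
    exact_mod_cast h12_nat_norm 2 (fun h => by have := Nat.le_of_dvd (by norm_num) h; omega)
  have hi : ∀ n : ℤ, ‖(n : ℚ_[p])‖ ≤ 1 := Padic.norm_int_le_one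
  have hs1 : ‖s‖ ≤ 1 := by
    have : ‖s‖ ^ 2 ≤ 1 := by
      rw [← norm_pow, hs, sub_eq_add_neg]
      apply h12_le_one
      · simpa [hz1] using hi 3
      · simpa [hna] using hi 4
    by_contra hlt
    push Not at hlt
    nlinarith
  have key : ∀ s : ℚ_[p], s ^ 2 = -3 * z ^ 2 - 4 * a → ‖s‖ ≤ 1 →
      ‖(-z + s) / 2‖ = 1 ∧ ((-z + s) / 2) ^ 3 + a * ((-z + s) / 2) = b := by
    intro s hs hs1
    have e : ((-z + s) / 2) ^ 3 + a * ((-z + s) / 2) = b := by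
      rw [← hz]
      linear_combination ((s - 3 * z) / 8) * hs
    refine ⟨h12_unit hna hnb ?_ e, e⟩
    rw [norm_div, h2, div_one]
    exact h12_le_one (by rw [norm_neg, hz1]) hs1
  have hne : ∀ s : ℚ_[p], s ^ 2 = -3 * z ^ 2 - 4 * a → z ≠ (-z + s) / 2 := by
    intro s hs h
    have : s = 3 * z := by linear_combination (-2) * h
    rw [this] at hs
    apply hf
    linear_combination hs / 4
  have hs' : (-s) ^ 2 = -3 * z ^ 2 - 4 * a := by rw [neg_sq, hs]
  refine ⟨z, (-z + s) / 2, (-z + -s) / 2, hne s hs, hne _ hs', ?_, ⟨hz1, hz⟩, key s hs hs1,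
    key _ hs' (by rwa [norm_neg]), ?_⟩
  · intro h; apply hs0; linear_combination h
  · intro w _ hw
    have h : (w - z) * ((w - (-z + s) / 2) * (w - (-z + -s) / 2)) = 0 := by
      linear_combination hw - hz - (w - z) / 4 * hs
    rcases mul_eq_zero.1 h with h | h
    · exact Or.inl (sub_eq_zero.1 h)
    · rcases mul_eq_zero.1 h with h | h
      · exact Or.inr (Or.inl (sub_eq_zero.1 h))
      · exact Or.inr (Or.inr (sub_eq_zero.1 h))

end helpers

/-- For a prime `p > 3` and nonzero `a b : ℚ_p` with `|a|_p = |b|_p = 1`,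
set `D = −4a³ − 27b²` and suppose `0 < |D|_p < 1`.  If `v_p(D)` is even and
`d₀^((p−1)/2) ≡ 1 (mod p)` then `x³ + a·x = b` has exactly three distinct solutions with
`|x|_p = 1`; if `v_p(D)` is even and `d₀^((p−1)/2) ≢ 1 (mod p)`, or `v_p(D)` is odd, then
it has exactly one such solution. -/
theorem stmt_12 (p : ℕ) [Fact p.Prime] (hp : 3 < p)
    (a b : ℚ_[p]) (ha : a ≠ 0) (hb : b ≠ 0)
    (hna : ‖a‖ = 1) (hnb : ‖b‖ = 1)
    (D : ℚ_[p]) (hD : D = -4 * a ^ 3 - 27 * b ^ 2)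
    (hD0 : 0 < ‖D‖) (hD1 : ‖D‖ < 1)
    (d0 : ℕ) (hd0l : 1 ≤ d0) (hd0u : d0 < p)
    (hdigit : ‖D * (p : ℚ_[p]) ^ (-D.valuation) - (d0 : ℚ_[p])‖ < 1) :
    (Even D.valuation → (d0 : ZMod p) ^ ((p - 1) / 2) = 1 →
      ∃ x y z : ℚ_[p], x ≠ y ∧ x ≠ z ∧ y ≠ z ∧
        (‖x‖ = 1 ∧ x ^ 3 + a * x = b) ∧
        (‖y‖ = 1 ∧ y ^ 3 + a * y = b) ∧
        (‖z‖ = 1 ∧ z ^ 3 + a * z = b) ∧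
        (∀ w : ℚ_[p], ‖w‖ = 1 → w ^ 3 + a * w = b → w = x ∨ w = y ∨ w = z)) ∧
    (Even D.valuation → (d0 : ZMod p) ^ ((p - 1) / 2) ≠ 1 →
      ∃! x : ℚ_[p], ‖x‖ = 1 ∧ x ^ 3 + a * x = b) ∧
    (Odd D.valuation → ∃! x : ℚ_[p], ‖x‖ = 1 ∧ x ^ 3 + a * x = b) := by
  have hDne : D ≠ 0 := norm_pos_iff.1 hD0
  obtain ⟨z, hz1, hz⟩ := h12_root hp hna hnb hD hD1
  have hsq := h12_sq hp hDne d0 hd0l hd0u hdigit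
  refine ⟨fun he h => h12_three hp hna hnb hD hDne hz1 hz (hsq.2 ⟨he, h⟩),
    fun _ h => h12_unique hD hz1 hz (fun hs => h (hsq.1 hs).2),
    fun ho => h12_unique hD hz1 hz (fun hs => ?_)⟩
  exact Int.not_even_iff_odd.2 ho (hsq.1 hs).1
end

section
/- Let p > 3 be a prime and let a, b ∈ ℚ_p be nonzero with |a|_p = |b|_p = 1. If |−4a³ − 27b²|_p = 1 and u_{p−2} ≡ 0 (mod p), then the equation x³ + a·x = b has exactly three distinct solutions x ∈ ℚ_p with |x|_p = 1. -/
open Polynomial in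
lemma aux_low {K : Type*} [Field K] (A B c2 c1 c0 : K)
    (h : (X ^ 3 + C A * X - C B : K[X]) ∣ C c2 * X ^ 2 + C c1 * X + C c0) :
    c2 = 0 ∧ c1 = 0 ∧ c0 = 0 := by
  have hm : (X ^ 3 + C A * X - C B : K[X]).Monic := by monicity!
  have hd : (X ^ 3 + C A * X - C B : K[X]).natDegree = 3 := by compute_degree!
  have h0 : (C c2 * X ^ 2 + C c1 * X + C c0 : K[X]) = 0 := by
    by_contra hne
    refine hm.not_dvd_of_natDegree_lt hne ?_ h
    rw [hd]
    have : (C c2 * X ^ 2 + C c1 * X + C c0 : K[X]).natDegree ≤ 2 := by compute_degree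
    omega
  refine ⟨?_, ?_, ?_⟩
  · simpa [coeff_X, coeff_C] using congrArg (fun q => coeff q 2) h0
  · simpa [coeff_X, coeff_C] using congrArg (fun q => coeff q 1) h0
  · simpa [coeff_X, coeff_C] using congrArg (fun q => coeff q 0) h0

open Polynomial in
lemma aux_seq_s13 {K : Type*} [Field K] (A B : K) (v : ℕ → K) (h1 : v 1 = 0) (h2 : v 2 = -A)
    (h3 : v 3 = B) (hrec : ∀ n, 1 ≤ n → v (n + 3) = B * v n - A * v (n + 1)) (n : ℕ) :
    (X ^ 3 + C A * X - C B : K[X]) ∣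
      X ^ (n + 3) - (C (v (n + 1)) * X ^ 2 + C (v (n + 2)) * X + C (v (n + 3) + A * v (n + 1))) := by
  induction n with
  | zero => simp [h1, h2, h3]; exact ⟨1, by ring⟩
  | succ n ih =>
    obtain ⟨q, hq⟩ := ih
    refine ⟨X * q + C (v (n + 1)), ?_⟩
    have e := hrec (n + 1) (by omega)
    rw [show n + 1 + 3 = n + 4 by ring, show n + 1 + 1 = n + 2 by ring] at *
    rw [show n + 1 + 2 = n + 3 by ring, e]
    simp only [map_add, map_mul, map_sub] at hq ⊢
    linear_combination X * hq

open Polynomial in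
lemma aux_roots (p : ℕ) [Fact p.Prime] (hp : 3 < p) (A B : ZMod p) (hA : A ≠ 0) (hB : B ≠ 0)
    (v : ℕ → ZMod p) (h1 : v 1 = 0) (h2 : v 2 = -A)
    (h3 : v 3 = B) (hrec : ∀ n, 1 ≤ n → v (n + 3) = B * v n - A * v (n + 1))
    (hv : v (p - 2) = 0) :
    ∃ r s t : ZMod p, r ≠ s ∧ r ≠ t ∧ s ≠ t ∧ r ^ 3 + A * r = B ∧ s ^ 3 + A * s = B ∧
      t ^ 3 + A * t = B := by
  have hp3 : (3 : ZMod p) ≠ 0 := by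
    intro h
    have : ((3 : ℕ) : ZMod p) = 0 := by exact_mod_cast h
    rw [ZMod.natCast_eq_zero_iff] at this
    exact absurd (Nat.le_of_dvd (by norm_num) this) (by omega)
  have hm : (X ^ 3 + C A * X - C B : (ZMod p)[X]).Monic := by monicity!
  have hd : (X ^ 3 + C A * X - C B : (ZMod p)[X]).natDegree = 3 := by compute_degree!
  have key := aux_seq_s13 A B v h1 h2 h3 hrec (p - 3)
  rw [show p - 3 + 3 = p by omega, show p - 3 + 1 = p - 2 by omega,
    show p - 3 + 2 = p - 1 by omega, hv] at key
  generalize v (p - 1) = α at key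
  generalize v p = β at key
  have keyd : (X ^ 3 + C A * X - C B : (ZMod p)[X]) ∣ X ^ p - (C α * X + C β) := by
    simpa using key
  have frob : (X ^ 3 + C A * X - C B : (ZMod p)[X]) ∣ (X ^ p) ^ 3 + C A * X ^ p - C B := by
    have := ZMod.expand_card (X ^ 3 + C A * X - C B : (ZMod p)[X])
    simp only [map_sub, map_add, map_mul, map_pow, expand_X, expand_C] at this
    rw [this]
    exact dvd_pow_self _ (by omega)
  have lowd : (X ^ 3 + C A * X - C B : (ZMod p)[X]) ∣ C (3 * α ^ 2 * β) * X ^ 2 +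
      C (3 * α * β ^ 2 + A * α - A * α ^ 3) * X + C (β ^ 3 + A * β - B + α ^ 3 * B) := by
    obtain ⟨q, hq⟩ := keyd
    obtain ⟨g, hg⟩ := frob
    have e : (X ^ p : (ZMod p)[X]) = C α * X + C β + (X ^ 3 + C A * X - C B) * q := by
      linear_combination hq
    rw [e] at hg
    refine ⟨g - C α ^ 3 - C A * q - q * (3 * (C α * X + C β) ^ 2 +
      3 * (C α * X + C β) * ((X ^ 3 + C A * X - C B) * q) + ((X ^ 3 + C A * X - C B) * q) ^ 2), ?_⟩
    simp only [map_add, map_mul, map_sub, map_pow, map_ofNat]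
    linear_combination hg
  obtain ⟨e2, e1, e0⟩ := aux_low _ _ _ _ _ lowd
  by_cases hα : α = 0
  · exfalso
    subst hα
    have hd2 : (X ^ 3 + C A * X - C B : (ZMod p)[X]) ∣ (X - C β) ^ p := by
      rw [sub_pow_char, ← C_pow, ZMod.pow_card]
      simpa using keyd
    obtain ⟨i, -, hi⟩ := (dvd_prime_pow (prime_X_sub_C β) p).1 hd2
    have heq := eq_of_monic_of_associated hm ((monic_X_sub_C β).pow i) hi
    have hi3 : i = 3 := by
      have := congrArg natDegree heq
      rw [hd] at this
      simpa using this.symm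
    subst hi3
    have hexp : (X ^ 3 + C A * X - C B : (ZMod p)[X]) ∣
        C (3 * β) * X ^ 2 + C (A - 3 * β ^ 2) * X + C (β ^ 3 - B) := by
      refine ⟨0, ?_⟩
      simp only [map_add, map_mul, map_sub, map_pow, map_ofNat]
      linear_combination heq
    obtain ⟨f2, f1, -⟩ := aux_low _ _ _ _ _ hexp
    have hβ : β = 0 := by simpa [hp3] using f2
    apply hA
    simpa [hβ] using f1
  have hβ : β = 0 := by simpa [hp3, hα] using e2
  subst hβ
  have hα3 : α ^ 3 = 1 := by
    have : B * (α ^ 3 - 1) = 0 := by linear_combination e0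
    rcases mul_eq_zero.1 this with h | h
    · exact absurd h hB
    · linear_combination h
  have hα1 : α = 1 := by
    have : A * (α - 1) = 0 := by linear_combination e1 + A * hα3
    rcases mul_eq_zero.1 this with h | h
    · exact absurd h hA
    · linear_combination h
  subst hα1
  have hdv : (X ^ 3 + C A * X - C B : (ZMod p)[X]) ∣ X ^ p - X := by simpa using keyd
  have hne : (X ^ p - X : (ZMod p)[X]) ≠ 0 :=
    FiniteField.X_pow_card_sub_X_ne_zero _ (by omega)
  have hroots : (X ^ p - X : (ZMod p)[X]).roots = Finset.univ.val := by
    have := FiniteField.roots_X_pow_card_sub_X (ZMod p)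
    rwa [ZMod.card] at this
  have hsp : (X ^ p - X : (ZMod p)[X]).Splits := by
    rw [splits_iff_card_roots, hroots, FiniteField.X_pow_card_sub_X_natDegree_eq _ (by omega),
      ← Finset.card_def, Finset.card_univ, ZMod.card]
  have hcard := (hsp.of_dvd hne hdv).natDegree_eq_card_roots
  have hnd : (X ^ 3 + C A * X - C B : (ZMod p)[X]).roots.Nodup := by
    refine Multiset.nodup_of_le (roots.le_of_dvd hne hdv) ?_
    rw [hroots]
    exact Finset.univ.nodup
  rw [hd, ← Multiset.toFinset_card_of_nodup hnd] at hcard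
  obtain ⟨r, s, t, hrs, hrt, hst, hset⟩ := Finset.card_eq_three.1 hcard.symm
  have hr : ∀ x ∈ ({r, s, t} : Finset (ZMod p)), x ^ 3 + A * x = B := by
    intro x hx
    rw [← hset, Multiset.mem_toFinset, mem_roots hm.ne_zero] at hx
    have : x ^ 3 + A * x - B = 0 := by simpa [IsRoot] using hx
    linear_combination this
  exact ⟨r, s, t, hrs, hrt, hst, hr r (by simp), hr s (by simp), hr t (by simp)⟩

lemma aux_alg {K : Type*} [Field K] (A B r s t : K) (hrs : r ≠ s) (hrt : r ≠ t) (hst : s ≠ t)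
    (hr : r ^ 3 + A * r = B) (hs : s ^ 3 + A * s = B) (ht : t ^ 3 + A * t = B) :
    (∀ w, w ^ 3 + A * w - B = (w - r) * (w - s) * (w - t)) ∧
      3 * r ^ 2 + A = (r - s) * (r - t) := by
  have h1 : r ^ 2 + r * s + s ^ 2 + A = 0 :=
    mul_left_cancel₀ (sub_ne_zero.2 hrs) (by linear_combination hr - hs)
  have h2 : r ^ 2 + r * t + t ^ 2 + A = 0 :=
    mul_left_cancel₀ (sub_ne_zero.2 hrt) (by linear_combination hr - ht)
  have h3 : r + s + t = 0 :=
    mul_left_cancel₀ (sub_ne_zero.2 hst) (by linear_combination h1 - h2)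
  have h4 : t = -r - s := by linear_combination h3
  subst h4
  refine ⟨fun w => ?_, ?_⟩
  · linear_combination (w - r) * h1 + hr
  · linear_combination h1

lemma toZMod_eq_zero (p : ℕ) [Fact p.Prime] (z : ℤ_[p]) : PadicInt.toZMod z = 0 ↔ ‖z‖ < 1 := by
  rw [← RingHom.mem_ker, PadicInt.ker_toZMod, IsLocalRing.mem_maximalIdeal,
    PadicInt.mem_nonunits]

lemma toZMod_ne_zero (p : ℕ) [Fact p.Prime] (z : ℤ_[p]) (h : PadicInt.toZMod z ≠ 0) :
    ‖z‖ = 1 := by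
  rw [Ne, toZMod_eq_zero] at h
  exact le_antisymm (PadicInt.norm_le_one z) (not_lt.1 h)

open Polynomial in
lemma aux_lift_s13 (p : ℕ) [Fact p.Prime] (a b : ℤ_[p]) (r : ZMod p)
    (hr : r ^ 3 + PadicInt.toZMod a * r = PadicInt.toZMod b)
    (hd : 3 * r ^ 2 + PadicInt.toZMod a ≠ 0) :
    ∃ z : ℤ_[p], PadicInt.toZMod z = r ∧ z ^ 3 + a * z = b := by
  obtain ⟨R, rfl⟩ := ZMod.ringHom_surjective (PadicInt.toZMod (p := p)) r
  have hder : ((X ^ 3 + C a * X - C b : ℤ_[p][X]).derivative.aeval R) = 3 * R ^ 2 + a := by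
    simp
    left
    norm_num
  have hn : ‖3 * R ^ 2 + a‖ = 1 := toZMod_ne_zero p _ (by
    rw [map_add, map_mul, map_pow, map_ofNat]
    exact hd)
  have hF : ‖R ^ 3 + a * R - b‖ < 1 := by
    rw [← toZMod_eq_zero]
    simp [hr]
  obtain ⟨z, hz, hz2, -⟩ := hensels_lemma (p := p) (R := ℤ_[p]) (F := X ^ 3 + C a * X - C b)
    (a := R) (by rw [hder, hn]; simpa using hF)
  refine ⟨z, ?_, ?_⟩
  · rw [hder, hn, ← toZMod_eq_zero, map_sub] at hz2
    linear_combination hz2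
  · have : z ^ 3 + a * z - b = 0 := by simpa using hz
    linear_combination this


/-- For a prime `p > 3` and nonzero `a b : ℚ_p` with `|a|_p = |b|_p = 1`:
if `|−4a³ − 27b²|_p = 1` and `u_{p−2} ≡ 0 (mod p)`, then `x³ + a·x = b` has exactly three
distinct solutions with `|x|_p = 1`.  Here `a₀, b₀` are the first digits of `a, b` and
`(u_n)` is the integer sequence `u₁ = 0`, `u₂ = −a₀`, `u₃ = b₀`,
`u_{n+3} = b₀·u_n − a₀·u_{n+1}`. -/
theorem stmt_13 (p : ℕ) [Fact p.Prime] (hp : 3 < p)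
    (a b : ℚ_[p]) (ha : a ≠ 0) (hb : b ≠ 0)
    (hna : ‖a‖ = 1) (hnb : ‖b‖ = 1)
    (a0 b0 : ℕ) (ha0l : 1 ≤ a0) (ha0u : a0 < p) (hb0l : 1 ≤ b0) (hb0u : b0 < p)
    (hda : ‖a - (a0 : ℚ_[p])‖ < 1) (hdb : ‖b - (b0 : ℚ_[p])‖ < 1)
    (u : ℕ → ℤ) (hu1 : u 1 = 0) (hu2 : u 2 = -(a0 : ℤ)) (hu3 : u 3 = (b0 : ℤ))
    (hurec : ∀ n, 1 ≤ n → u (n + 3) = (b0 : ℤ) * u n - (a0 : ℤ) * u (n + 1))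
    (hDnorm : ‖-4 * a ^ 3 - 27 * b ^ 2‖ = 1)
    (hu : ((u (p - 2) : ℤ) : ZMod p) = 0) :
    ∃ x y z : ℚ_[p], x ≠ y ∧ x ≠ z ∧ y ≠ z ∧
      (‖x‖ = 1 ∧ x ^ 3 + a * x = b) ∧
      (‖y‖ = 1 ∧ y ^ 3 + a * y = b) ∧
      (‖z‖ = 1 ∧ z ^ 3 + a * z = b) ∧
      (∀ w : ℚ_[p], ‖w‖ = 1 → w ^ 3 + a * w = b → w = x ∨ w = y ∨ w = z) := by
  obtain ⟨az, rfl⟩ : ∃ az : ℤ_[p], (az : ℚ_[p]) = a := ⟨⟨a, hna.le⟩, rfl⟩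
  obtain ⟨bz, rfl⟩ : ∃ bz : ℤ_[p], (bz : ℚ_[p]) = b := ⟨⟨b, hnb.le⟩, rfl⟩
  have hA : PadicInt.toZMod az = (a0 : ZMod p) := by
    have : PadicInt.toZMod (az - (a0 : ℤ_[p])) = 0 := by
      rw [toZMod_eq_zero, PadicInt.norm_def]
      simpa using hda
    simpa [sub_eq_zero] using this
  have hB : PadicInt.toZMod bz = (b0 : ZMod p) := by
    have : PadicInt.toZMod (bz - (b0 : ℤ_[p])) = 0 := by
      rw [toZMod_eq_zero, PadicInt.norm_def]
      simpa using hdb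
    simpa [sub_eq_zero] using this
  have hcast : ∀ c : ℕ, 1 ≤ c → c < p → (c : ZMod p) ≠ 0 := by
    intro c h1 h2 h
    rw [ZMod.natCast_eq_zero_iff] at h
    exact absurd (Nat.le_of_dvd (by omega) h) (by omega)
  obtain ⟨r, s, t, hrs, hrt, hst, hr, hs, ht⟩ := aux_roots p hp (a0 : ZMod p) (b0 : ZMod p)
    (hcast a0 ha0l ha0u) (hcast b0 hb0l hb0u) (fun n => ((u n : ℤ) : ZMod p))
    (by simp [hu1]) (by simp [hu2]) (by simp [hu3])
    (fun n hn => by simp [hurec n hn]) hu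
  have main : ∀ r s t : ZMod p, r ≠ s → r ≠ t → s ≠ t → r ^ 3 + (a0 : ZMod p) * r = b0 →
      s ^ 3 + (a0 : ZMod p) * s = b0 → t ^ 3 + (a0 : ZMod p) * t = b0 →
      ∃ z : ℤ_[p], PadicInt.toZMod z = r ∧ ‖(z : ℚ_[p])‖ = 1 ∧
        (z : ℚ_[p]) ^ 3 + (az : ℚ_[p]) * z = bz := by
    intro r s t hrs hrt hst hr hs ht
    have hd := (aux_alg _ _ r s t hrs hrt hst hr hs ht).2
    obtain ⟨z, hz, hz2⟩ := aux_lift_s13 p az bz r (by rw [hA, hB, hr])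
      (by rw [hA, hd]; exact mul_ne_zero (sub_ne_zero.2 hrs) (sub_ne_zero.2 hrt))
    refine ⟨z, hz, ?_, ?_⟩
    · rw [← PadicInt.norm_def]
      apply toZMod_ne_zero
      rw [hz]
      rintro rfl
      exact hcast b0 hb0l hb0u (by rw [← hr]; ring)
    · have := congrArg (fun q : ℤ_[p] => (q : ℚ_[p])) hz2
      simpa using this
  obtain ⟨x, hx, hx1, hx2⟩ := main r s t hrs hrt hst hr hs ht
  obtain ⟨y, hy, hy1, hy2⟩ := main s r t hrs.symm hst hrt hs hr ht
  obtain ⟨z, hz, hz1, hz2⟩ := main t r s hrt.symm hst.symm hrs ht hr hs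
  have hxy : (x : ℚ_[p]) ≠ y := by
    intro h
    apply hrs
    rw [← hx, ← hy, PadicInt.ext h]
  have hxz : (x : ℚ_[p]) ≠ z := by
    intro h
    apply hrt
    rw [← hx, ← hz, PadicInt.ext h]
  have hyz : (y : ℚ_[p]) ≠ z := by
    intro h
    apply hst
    rw [← hy, ← hz, PadicInt.ext h]
  refine ⟨x, y, z, hxy, hxz, hyz, ⟨hx1, hx2⟩, ⟨hy1, hy2⟩, ⟨hz1, hz2⟩, fun w _ hw => ?_⟩
  have hf := (aux_alg (az : ℚ_[p]) bz (x : ℚ_[p]) y z hxy hxz hyz hx2 hy2 hz2).1 w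
  rw [hw, sub_self] at hf
  rcases mul_eq_zero.1 hf.symm with h | h
  · rcases mul_eq_zero.1 h with h | h
    · exact Or.inl (sub_eq_zero.1 h)
    · exact Or.inr (Or.inl (sub_eq_zero.1 h))
  · exact Or.inr (Or.inr (sub_eq_zero.1 h))
end

section
/- Let p > 3 be a prime, let q ≥ 3 be a natural number with |q|_p < 1, and let ρ ∈ ℚ_p with |ρ|_p = 1 and |ρ − 1|_p < 1. If x ∈ ℚ_p satisfies x³ − A·x² − B·x + C = 0, then x ∈ E_p if and only if |x − A/3|_p < 1. -/
/-- For a prime `p > 3`, a natural number `q ≥ 3` with `|q|_p < 1` and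
`ρ ∈ ℚ_p` with `|ρ|_p = 1`, `|ρ − 1|_p < 1`: if `x³ − A·x² − B·x + C = 0`, then
`x ∈ E_p` (i.e. `|x|_p = 1` and `|x − 1|_p < p^{−1/(p−1)}`) iff `|x − A/3|_p < 1`. -/
theorem stmt_14 (p : ℕ) [Fact p.Prime] (hp : 3 < p)
    (q : ℕ) (hq : 3 ≤ q) (hqp : ‖(q : ℚ_[p])‖ < 1)
    (ρ : ℚ_[p]) (hρ : ‖ρ‖ = 1) (hρ1 : ‖ρ - 1‖ < 1)
    (A B C : ℚ_[p])
    (hA : A = ρ ^ 3 - 3 * ρ - 3 * (q : ℚ_[p]) + 5)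
    (hB : B = ρ * (ρ - 3) ^ 2 + 9 * (q : ℚ_[p]) + 3 * ρ * (q : ℚ_[p]) * (ρ - 2)
      - 3 * (q : ℚ_[p]) ^ 2 - 7)
    (hC : C = ((q : ℚ_[p]) - 1) ^ 3)
    (x : ℚ_[p]) (hx : x ^ 3 - A * x ^ 2 - B * x + C = 0) :
    (‖x‖ = 1 ∧ ‖x - 1‖ < (p : ℝ) ^ (-(1 : ℝ) / ((p : ℝ) - 1))) ↔ ‖x - A / 3‖ < 1 := by
  have hp1 : (1 : ℝ) < p := by exact_mod_cast (by omega : 1 < p)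
  have hp3 : (3 : ℝ) < p := by exact_mod_cast hp
  have h3 : ‖(3 : ℚ_[p])‖ = 1 := by
    have : ‖((3 : ℕ) : ℚ_[p])‖ = 1 := by
      rw [Padic.norm_natCast_eq_one_iff]
      rw [Nat.coprime_primes Fact.out Nat.prime_three]
      omega
    simpa using this
  have h30 : (3 : ℚ_[p]) ≠ 0 := by
    intro h
    rw [h] at h3
    simp at h3
  have hadd : ∀ a b : ℚ_[p], ‖a‖ < 1 → ‖b‖ < 1 → ‖a + b‖ < 1 := fun a b ha hb =>
    lt_of_le_of_lt (Padic.nonarchimedean a b) (max_lt ha hb)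
  have hρ2 : ‖ρ + 2‖ ≤ 1 := by
    have h : ρ + 2 = (ρ - 1) + 3 := by ring
    rw [h]
    exact (Padic.nonarchimedean _ _).trans (max_le hρ1.le h3.le)
  have hd : ‖A / 3 - 1‖ < 1 := by
    have h : A / 3 - 1 = (ρ - 1) * ((ρ - 1) * (ρ + 2)) / 3 + -(q : ℚ_[p]) := by
      rw [hA]; field_simp; ring
    rw [h]
    apply hadd
    · rw [norm_div, h3, div_one, norm_mul, norm_mul]
      have : ‖ρ - 1‖ * ‖ρ + 2‖ ≤ 1 := mul_le_one₀ hρ1.le (norm_nonneg _) hρ2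
      exact (mul_le_of_le_one_right (norm_nonneg _) this).trans_lt hρ1
    · rwa [norm_neg]
  constructor
  · rintro ⟨-, h⟩
    have h1 : ‖x - 1‖ < 1 := h.trans (Real.rpow_lt_one_of_one_lt_of_neg hp1
      (div_neg_of_neg_of_pos (by norm_num) (by linarith)))
    have e : x - A / 3 = (x - 1) + -(A / 3 - 1) := by ring
    rw [e]
    exact hadd _ _ h1 (by rwa [norm_neg])
  · intro h
    have h1 : ‖x - 1‖ < 1 := by
      have e : x - 1 = (x - A / 3) + (A / 3 - 1) := by ring
      rw [e]
      exact hadd _ _ h hd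
    constructor
    · have e : x = (x - 1) + 1 := by ring
      rw [e, Padic.add_eq_max_of_ne (by rw [norm_one]; exact h1.ne), norm_one]
      exact max_eq_right h1.le
    · have h2 : ‖x - 1‖ ≤ (p : ℝ) ^ (-1 : ℤ) := by
        rw [Padic.norm_le_pow_iff_norm_lt_pow_add_one]
        simpa using h1
      refine h2.trans_lt ?_
      rw [← Real.rpow_intCast]
      apply Real.rpow_lt_rpow_of_exponent_lt hp1
      rw [lt_div_iff₀ (by linarith)]
      push_cast
      linarith
end

section
/- Let p > 3 be a prime, let q ≥ 3 be a natural number with |q|_p < 1, and let ρ ∈ ℚ_p with |ρ|_p = 1 and |ρ − 1|_p < 1. Then |α|_p = |ρ − 1|_p² and |β|_p = |ρ − 1|_p³, where α = −(B + A²/3) and β = (2/27)A³ + (A·B)/3 − C. -/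
lemma norm_unit_add {p : ℕ} [Fact p.Prime] (n : ℕ) (hn0 : 0 < n) (hn : n < p)
    (d q k l : ℤ_[p]) (hd : ‖d‖ < 1) (hq : ‖q‖ < 1) :
    ‖(((n : ℤ_[p]) + (q * l + d * k) : ℤ_[p]) : ℚ_[p])‖ = 1 := by
  have h1 : ‖(n : ℤ_[p])‖ = 1 := by
    rw [PadicInt.norm_natCast_eq_one_iff, Nat.Prime.coprime_iff_not_dvd Fact.out]
    exact Nat.not_dvd_of_pos_of_lt hn0 hn
  have hm : ∀ a b : ℤ_[p], ‖a‖ < 1 → ‖a * b‖ < 1 := by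
    intro a b ha
    rw [norm_mul]
    exact lt_of_le_of_lt (mul_le_of_le_one_right (norm_nonneg _) (PadicInt.norm_le_one b)) ha
  have h2 : ‖q * l + d * k‖ < 1 :=
    lt_of_le_of_lt (PadicInt.nonarchimedean _ _) (max_lt (hm _ _ hq) (hm _ _ hd))
  have h3 : ‖(n : ℤ_[p]) + (q * l + d * k)‖ = 1 := by
    rw [PadicInt.norm_add_eq_max_of_ne (by rw [h1]; exact h2.ne'), h1, max_eq_left h2.le]
  rw [← PadicInt.norm_def]
  exact h3


/-- For a prime `p > 3`, a natural number `q ≥ 3` with `|q|_p < 1` and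
`ρ ∈ ℚ_p` with `|ρ|_p = 1`, `|ρ − 1|_p < 1`: with `α = −(B + A²/3)` and
`β = (2/27)A³ + AB/3 − C`, one has `|α|_p = |ρ − 1|_p²` and `|β|_p = |ρ − 1|_p³`. -/
theorem stmt_15 (p : ℕ) [Fact p.Prime] (hp : 3 < p)
    (q : ℕ) (hq : 3 ≤ q) (hqp : ‖(q : ℚ_[p])‖ < 1)
    (ρ : ℚ_[p]) (hρ : ‖ρ‖ = 1) (hρ1 : ‖ρ - 1‖ < 1)
    (A B C : ℚ_[p])
    (hA : A = ρ ^ 3 - 3 * ρ - 3 * (q : ℚ_[p]) + 5)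
    (hB : B = ρ * (ρ - 3) ^ 2 + 9 * (q : ℚ_[p]) + 3 * ρ * (q : ℚ_[p]) * (ρ - 2)
      - 3 * (q : ℚ_[p]) ^ 2 - 7)
    (hC : C = ((q : ℚ_[p]) - 1) ^ 3)
    (α β : ℚ_[p])
    (hα : α = -(B + A ^ 2 / 3))
    (hβ : β = (2 / 27) * A ^ 3 + A * B / 3 - C) :
    ‖α‖ = ‖ρ - 1‖ ^ 2 ∧ ‖β‖ = ‖ρ - 1‖ ^ 3 := by
  have h3 : ‖((3 : ℕ) : ℚ_[p])‖ = 1 := by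
    have := norm_unit_add (p := p) 3 (by norm_num) hp 0 0 0 0 (by simp) (by simp)
    rw [zero_mul, add_zero, add_zero, PadicInt.coe_natCast] at this
    exact this
  have h30 : (3 : ℚ_[p]) ≠ 0 := by norm_num
  obtain ⟨t, ht⟩ : ∃ t : ℤ_[p], (t : ℚ_[p]) = 1 / 3 :=
    ⟨⟨1 / 3, by rw [norm_div]; norm_num at h3 ⊢; rw [h3]; norm_num⟩, rfl⟩
  obtain ⟨d, hd⟩ : ∃ d : ℤ_[p], (d : ℚ_[p]) = ρ - 1 := ⟨⟨ρ - 1, hρ1.le⟩, rfl⟩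
  have hd1 : ‖d‖ < 1 := by rw [PadicInt.norm_def, hd]; exact hρ1
  have hq1 : ‖(q : ℤ_[p])‖ < 1 := by rw [PadicInt.norm_def]; simpa using hqp
  have ea := norm_unit_add 3 (by norm_num) hp d q
    (1 + 2 * (1 - q) + d * (3 + d) ^ 2 * t) (-3) hd1 hq1
  have eb := norm_unit_add 2 (by norm_num) (by omega) d q
    (2 * t * (1 - q) * (3 + d) ^ 2 + 2 * t ^ 3 * d ^ 2 * (3 + d) ^ 3
      + t * (3 + d) * (d - 3 * (1 - q))) (q - 3) hd1 hq1
  have c2 : ((2 : ℤ_[p]) : ℚ_[p]) = 2 := by exact_mod_cast PadicInt.coe_natCast (p := p) 2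
  have c3 : ((3 : ℤ_[p]) : ℚ_[p]) = 3 := by exact_mod_cast PadicInt.coe_natCast (p := p) 3
  push_cast at ea eb
  simp only [ht, hd, c2, c3] at ea eb
  constructor
  · rw [← norm_pow, ← mul_one ‖(ρ - 1) ^ 2‖, ← ea, ← norm_mul, ← norm_neg, hα, hA, hB]
    congr 1
    field_simp
    ring
  · rw [← norm_pow, ← mul_one ‖(ρ - 1) ^ 3‖, ← eb, ← norm_mul, hβ, hA, hB, hC]
    congr 1
    field_simp
    ring
end

section
/- Let p > 3 be a prime, let q ≥ 3 be a natural number and ρ ∈ ℚ_p with |q − 1|_p < 1 and |ρ|_p ≤ |q − 1|_p², and set g_ρ(x) = (ρ·x + q − 1)/(x + ρ + q − 2). Then: (i) for every x ∈ ℚ_p with |x|_p ≠ 1 one has x + ρ + q − 2 ≠ 0 and |g_ρ(x)|_p ≤ max{|q − 1|_p, |ρ|_p}; (ii) for every x ∈ ℚ_p with x + ρ + q − 2 ≠ 0, if |g_ρ(x)|_p > 1 then |x|_p = 1. -/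
/-- For a prime `p > 3`, a natural number `q ≥ 3` and `ρ ∈ ℚ_p` with
`|q − 1|_p < 1` and `|ρ|_p ≤ |q − 1|_p²`, with `g_ρ(x) = (ρx + q − 1)/(x + ρ + q − 2)`:
(i) if `|x|_p ≠ 1` then the denominator is nonzero and
`|g_ρ(x)|_p ≤ max{|q − 1|_p, |ρ|_p}`;
(ii) if the denominator is nonzero and `|g_ρ(x)|_p > 1`, then `|x|_p = 1`. -/
theorem stmt_17 (p : ℕ) [Fact p.Prime] (hp : 3 < p)
    (q : ℕ) (hq : 3 ≤ q) (ρ : ℚ_[p])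
    (hq1 : ‖(q : ℚ_[p]) - 1‖ < 1) (hρ : ‖ρ‖ ≤ ‖(q : ℚ_[p]) - 1‖ ^ 2) :
    (∀ x : ℚ_[p], ‖x‖ ≠ 1 →
      x + ρ + (q : ℚ_[p]) - 2 ≠ 0 ∧
      ‖(ρ * x + (q : ℚ_[p]) - 1) / (x + ρ + (q : ℚ_[p]) - 2)‖ ≤
        max ‖(q : ℚ_[p]) - 1‖ ‖ρ‖) ∧
    (∀ x : ℚ_[p], x + ρ + (q : ℚ_[p]) - 2 ≠ 0 →
      1 < ‖(ρ * x + (q : ℚ_[p]) - 1) / (x + ρ + (q : ℚ_[p]) - 2)‖ → ‖x‖ = 1) := by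
  have hρ1 : ‖ρ‖ < 1 := by
    have := norm_nonneg ((q : ℚ_[p]) - 1)
    nlinarith
  have hs : ‖ρ + ((q : ℚ_[p]) - 1)‖ < 1 :=
    lt_of_le_of_lt (Padic.nonarchimedean _ _) (max_lt hρ1 hq1)
  have hc : ‖ρ + ((q : ℚ_[p]) - 1) + (-1)‖ = 1 := by
    have h1 : ‖(-1 : ℚ_[p])‖ = 1 := by simp
    rw [Padic.add_eq_max_of_ne (by rw [h1]; exact hs.ne), h1, max_eq_right hs.le]
  have key : ∀ x : ℚ_[p], ‖x‖ ≠ 1 →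
      x + ρ + (q : ℚ_[p]) - 2 ≠ 0 ∧
      ‖(ρ * x + (q : ℚ_[p]) - 1) / (x + ρ + (q : ℚ_[p]) - 2)‖ ≤
        max ‖(q : ℚ_[p]) - 1‖ ‖ρ‖ := by
    intro x hx
    have hd : ‖x + ρ + (q : ℚ_[p]) - 2‖ = max ‖x‖ 1 := by
      have e : x + ρ + (q : ℚ_[p]) - 2 = x + (ρ + ((q : ℚ_[p]) - 1) + (-1)) := by ring
      rw [e, Padic.add_eq_max_of_ne (by rw [hc]; exact hx), hc]
    have hpos : 0 < max ‖x‖ 1 := lt_of_lt_of_le one_pos (le_max_right _ _)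
    refine ⟨by rw [← norm_pos_iff, hd]; exact hpos, ?_⟩
    rw [norm_div, hd, div_le_iff₀ hpos, add_sub_assoc]
    refine (Padic.nonarchimedean _ _).trans (max_le ?_ ?_)
    · rw [norm_mul]
      exact mul_le_mul (le_max_right _ _) (le_max_left _ _) (norm_nonneg _)
        ((norm_nonneg _).trans (le_max_right _ _))
    · calc ‖(q : ℚ_[p]) - 1‖ = ‖(q : ℚ_[p]) - 1‖ * 1 := (mul_one _).symm
        _ ≤ _ := mul_le_mul (le_max_left _ _) (le_max_right _ _) zero_le_one
          ((norm_nonneg _).trans (le_max_right _ _))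
  refine ⟨key, fun x _ h => ?_⟩
  by_contra hx
  exact absurd h (not_lt.mpr ((key x hx).2.trans (max_le hq1.le hρ1.le)))
end

section
/- Let p > 3 be a prime, let q ≥ 3 be a natural number and ρ ∈ ℚ_p with |ρ|_p < |q − 1|_p² < 1, and suppose −3 is a square in ℚ_p. Let x₁ be the unique solution of x³ − A·x² − B·x + C = 0 in ℚ_p with |x₁|_p < 1. Encode the vertices of the semi-infinite Cayley tree of order three (other than the root) as nonempty finite lists over a three-element index set, the direct successors of a vertex v being the lists v·i obtained by appending one index i. Suppose h assigns to every nonempty list v an element h(v) ∈ ℚ_p such that for every nonempty v: h(v·i) + ρ + q − 2 ≠ 0 for each of the three indices i, h(v) = ∏_{i=1}^{3} (ρ·h(v·i) + q − 1)/(h(v·i) + ρ + q − 2), and |h(v)|_p ≠ 1. Then h(v) = x₁ for every nonempty list v. -/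
theorem aux_add {p : ℕ} [Fact p.Prime] {x y : ℚ_[p]} {c : ℝ} (hx : ‖x‖ ≤ c) (hy : ‖y‖ ≤ c) :
    ‖x + y‖ ≤ c := (Padic.nonarchimedean x y).trans (max_le hx hy)

theorem aux_add_lt {p : ℕ} [Fact p.Prime] {x y : ℚ_[p]} {c : ℝ} (hx : ‖x‖ < c) (hy : ‖y‖ < c) :
    ‖x + y‖ < c := (Padic.nonarchimedean x y).trans_lt (max_lt hx hy)

theorem aux_eq {p : ℕ} [Fact p.Prime] {x y : ℚ_[p]} (hxy : ‖x‖ < ‖y‖) :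
    ‖x + y‖ = ‖y‖ := by
  rw [Padic.add_eq_max_of_ne hxy.ne, max_eq_right hxy.le]

theorem aux_den {p : ℕ} [Fact p.Prime] {x ρ t : ℚ_[p]} (hx : ‖x‖ < 1) (hr : ‖ρ‖ < 1)
    (ht : ‖t‖ < 1) : ‖x + ρ + t - 1‖ = 1 := by
  have h1 : ‖(-1 : ℚ_[p])‖ = 1 := by simp
  have h2 := aux_add_lt (aux_add_lt hx hr) ht
  rw [sub_eq_add_neg, aux_eq (by rw [h1]; exact h2), h1]

theorem aux_small {p : ℕ} [Fact p.Prime] {x ρ t : ℚ_[p]} (hr : ‖ρ‖ < ‖t‖)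
    (ht : ‖t‖ < 1) (hx : ‖x‖ ≠ 1) : ‖(ρ * x + t) / (x + ρ + t - 1)‖ ≤ ‖t‖ := by
  rw [norm_div]
  rcases lt_or_gt_of_ne hx with hx | hx
  · rw [aux_den hx (hr.trans ht) ht, div_one]
    refine aux_add ?_ le_rfl
    rw [norm_mul]
    nlinarith [norm_nonneg ρ, norm_nonneg x]
  · have h1 : ‖(-1 : ℚ_[p])‖ ≤ 1 := by simp
    have h2 : ‖ρ + t + -1‖ ≤ 1 := aux_add (aux_add (hr.trans ht).le ht.le) h1
    have h3 : ‖x + ρ + t - 1‖ = ‖x‖ := by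
      rw [show x + ρ + t - 1 = (ρ + t + -1) + x by ring]
      exact aux_eq (h2.trans_lt hx)
    rw [h3, div_le_iff₀ (by linarith)]
    refine aux_add ?_ ?_
    · rw [norm_mul]
      gcongr
    · nlinarith [norm_nonneg t]

theorem aux_contr {p : ℕ} [Fact p.Prime] {x y ρ t : ℚ_[p]} (hr : ‖ρ‖ < ‖t‖)
    (ht : ‖t‖ < 1) (hx : ‖x‖ < 1) (hy : ‖y‖ < 1) :
    ‖(ρ * x + t) / (x + ρ + t - 1) - (ρ * y + t) / (y + ρ + t - 1)‖ ≤ ‖x - y‖ := by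
  have dx := aux_den hx (hr.trans ht) ht
  have dy := aux_den hy (hr.trans ht) ht
  have dx0 : x + ρ + t - 1 ≠ 0 := by
    intro h0; rw [h0] at dx; simp at dx
  have dy0 : y + ρ + t - 1 ≠ 0 := by
    intro h0; rw [h0] at dy; simp at dy
  rw [div_sub_div _ _ dx0 dy0, norm_div, norm_mul (x + ρ + t - 1), dx, dy,
    show (ρ * x + t) * (y + ρ + t - 1) - (x + ρ + t - 1) * (ρ * y + t)
      = (ρ * (ρ + t + -1) + -t) * (x - y) by ring, norm_mul]
  have h1 : ‖(-1 : ℚ_[p])‖ ≤ 1 := by simp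
  have h2 : ‖ρ + t + -1‖ ≤ 1 := aux_add (aux_add (hr.trans ht).le ht.le) h1
  have h3 : ‖ρ * (ρ + t + -1) + -t‖ ≤ 1 := by
    refine aux_add ?_ (by rw [norm_neg]; exact ht.le)
    rw [norm_mul]
    exact mul_le_one₀ (hr.trans ht).le (norm_nonneg _) h2
  have := mul_le_mul_of_nonneg_right h3 (norm_nonneg (x - y))
  linarith

theorem aux_prod {p : ℕ} [Fact p.Prime] {a b c d : ℚ_[p]} {τ e : ℝ} (hτ : τ ≤ 1)
    (ha : ‖a‖ ≤ τ) (hb : ‖b‖ ≤ τ) (hc : ‖c‖ ≤ τ) (hd : ‖d‖ ≤ τ)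
    (had : ‖a - d‖ ≤ e) (hbd : ‖b - d‖ ≤ e) (hcd : ‖c - d‖ ≤ e) :
    ‖a * b * c - d ^ 3‖ ≤ τ * e := by
  have hτ0 : 0 ≤ τ := (norm_nonneg _).trans ha
  have key : ∀ u v w : ℚ_[p], ‖u‖ ≤ τ → ‖v‖ ≤ τ → ‖w‖ ≤ e → ‖u * v * w‖ ≤ τ * e := by
    intro u v w hu hv hw
    rw [norm_mul, norm_mul]
    have : ‖u‖ * ‖v‖ ≤ τ * 1 := mul_le_mul hu (hv.trans hτ) (norm_nonneg _) hτ0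
    rw [mul_one] at this
    exact mul_le_mul this hw (norm_nonneg _) hτ0
  rw [show a * b * c - d ^ 3 = b * c * (a - d) + d * c * (b - d) + d * d * (c - d) by ring]
  exact aux_add (aux_add (key _ _ _ hb hc had) (key _ _ _ hd hc hbd)) (key _ _ _ hd hd hcd)

/-- For a prime `p > 3`, a natural number `q ≥ 3` and `ρ ∈ ℚ_p` with
`|ρ|_p < |q − 1|_p² < 1` and `−3` a square in `ℚ_p`, let `x₁` be the unique solution of
`x³ − A·x² − B·x + C = 0` with `|x₁|_p < 1`.  Encode non-root vertices of the
semi-infinite Cayley tree of order three as nonempty lists over `Fin 3`, the successors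
of `v` being `v ++ [i]`.  If `h` assigns to every nonempty list an element of `ℚ_p` such
that the denominators `h(v·i) + ρ + q − 2` never vanish,
`h(v) = ∏ᵢ (ρ·h(v·i) + q − 1)/(h(v·i) + ρ + q − 2)` and `|h(v)|_p ≠ 1` for every
nonempty `v`, then `h(v) = x₁` for every nonempty `v`. -/
theorem stmt_19 (p : ℕ) [Fact p.Prime] (hp : 3 < p)
    (q : ℕ) (hq : 3 ≤ q) (ρ : ℚ_[p])
    (hρ : ‖ρ‖ < ‖(q : ℚ_[p]) - 1‖ ^ 2) (hq1 : ‖(q : ℚ_[p]) - 1‖ ^ 2 < 1)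
    (hsq : IsSquare (-3 : ℚ_[p]))
    (A B C : ℚ_[p])
    (hA : A = ρ ^ 3 - 3 * ρ - 3 * (q : ℚ_[p]) + 5)
    (hB : B = ρ * (ρ - 3) ^ 2 + 9 * (q : ℚ_[p]) + 3 * ρ * (q : ℚ_[p]) * (ρ - 2)
      - 3 * (q : ℚ_[p]) ^ 2 - 7)
    (hC : C = ((q : ℚ_[p]) - 1) ^ 3)
    (x₁ : ℚ_[p]) (hx₁root : x₁ ^ 3 - A * x₁ ^ 2 - B * x₁ + C = 0) (hx₁n : ‖x₁‖ < 1)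
    (hx₁uniq : ∀ y : ℚ_[p], y ^ 3 - A * y ^ 2 - B * y + C = 0 → ‖y‖ < 1 → y = x₁)
    (h : List (Fin 3) → ℚ_[p])
    (hden : ∀ v : List (Fin 3), v ≠ [] → ∀ i : Fin 3,
      h (v ++ [i]) + ρ + (q : ℚ_[p]) - 2 ≠ 0)
    (heq : ∀ v : List (Fin 3), v ≠ [] →
      h v = ∏ i : Fin 3,
        (ρ * h (v ++ [i]) + (q : ℚ_[p]) - 1) / (h (v ++ [i]) + ρ + (q : ℚ_[p]) - 2))
    (hnorm : ∀ v : List (Fin 3), v ≠ [] → ‖h v‖ ≠ 1) :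
    ∀ v : List (Fin 3), v ≠ [] → h v = x₁ := by
  obtain ⟨t, ht⟩ : ∃ t : ℚ_[p], t = (q : ℚ_[p]) - 1 := ⟨_, rfl⟩
  have hqt : (q : ℚ_[p]) = t + 1 := by rw [ht]; ring
  rw [← ht] at hρ hq1 hC
  have ht1 : ‖t‖ < 1 := by
    by_contra hcon
    push Not at hcon
    nlinarith
  have hr : ‖ρ‖ < ‖t‖ := by nlinarith [norm_nonneg t]
  have e1 : ∀ x : ℚ_[p], ρ * x + (q : ℚ_[p]) - 1 = ρ * x + t := by
    intro x; rw [hqt]; ring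
  have e2 : ∀ x : ℚ_[p], x + ρ + (q : ℚ_[p]) - 2 = x + ρ + t - 1 := by
    intro x; rw [hqt]; ring
  simp only [e1, e2, Fin.prod_univ_three] at heq
  have hs : ∀ v : List (Fin 3), v ≠ [] → ∀ i : Fin 3,
      ‖(ρ * h (v ++ [i]) + t) / (h (v ++ [i]) + ρ + t - 1)‖ ≤ ‖t‖ :=
    fun v _ i => aux_small hr ht1 (hnorm _ (by simp))
  have hlt : ∀ v : List (Fin 3), v ≠ [] → ‖h v‖ < 1 := by
    intro v hv
    rw [heq v hv, norm_mul, norm_mul]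
    refine lt_of_le_of_lt ?_ ht1
    have h0 := hs v hv 0
    have h1 := (hs v hv 1).trans ht1.le
    have h2 := (hs v hv 2).trans ht1.le
    calc _ ≤ ‖t‖ * 1 * 1 := by gcongr
      _ = ‖t‖ := by ring
  have hxs := aux_small (x := x₁) hr ht1 hx₁n.ne
  have hfix : x₁ = ((ρ * x₁ + t) / (x₁ + ρ + t - 1)) ^ 3 := by
    have dx := aux_den hx₁n (hr.trans ht1) ht1
    have dx0 : x₁ + ρ + t - 1 ≠ 0 := by
      intro h0; rw [h0] at dx; simp at dx
    rw [div_pow, eq_div_iff (pow_ne_zero 3 dx0)]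
    rw [hA, hB, hC, hqt] at hx₁root
    linear_combination (x₁ - 1) * hx₁root
  have main : ∀ n : ℕ, ∀ v : List (Fin 3), v ≠ [] → ‖h v - x₁‖ ≤ ‖t‖ ^ n := by
    intro n
    induction n with
    | zero =>
      intro v hv
      rw [pow_zero, sub_eq_add_neg]
      exact aux_add (hlt v hv).le (by rw [norm_neg]; exact hx₁n.le)
    | succ n ih =>
      intro v hv
      have hc : ∀ i : Fin 3, ‖(ρ * h (v ++ [i]) + t) / (h (v ++ [i]) + ρ + t - 1)
          - (ρ * x₁ + t) / (x₁ + ρ + t - 1)‖ ≤ ‖t‖ ^ n := fun i =>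
        (aux_contr hr ht1 (hlt _ (by simp)) hx₁n).trans (ih _ (by simp))
      have := aux_prod ht1.le (hs v hv 0) (hs v hv 1) (hs v hv 2) hxs (hc 0) (hc 1) (hc 2)
      rw [← hfix, ← heq v hv] at this
      rw [pow_succ']
      exact this
  intro v hv
  have hlim := tendsto_pow_atTop_nhds_zero_of_lt_one (norm_nonneg t) ht1
  have h0 : ‖h v - x₁‖ ≤ 0 := ge_of_tendsto' hlim (fun n => main n v hv)
  exact sub_eq_zero.mp (norm_le_zero_iff.mp h0)
end
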